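/- For every ε > 0 there exists L > 0 with the following property. Let X and Y be independent finitely supported random variables taking values in G = 𝔽₂ⁿ and suppose that H[X + Y] = H[X] + H[Y] − s for some s ≥ 0. Then there exists a subspace V ⊆ G with H[𝐔_V] ≤ L (H[X] + H[Y]) such that both H[X | π_V(X)] ≥ s − ε (H[X] + H[Y]) and H[Y | π_V(Y)] ≥ s − ε (H[X] + H[Y]). -/

import Mathlib

open Real Pointwise

noncomputable section

abbrev Fvec (n : ℕ) : Type := Fin n → ZMod 2

/-- Shannon entropy (natural log) of a finitely supported distribution. -/
def ent {A : Type*} (p : A → ℝ) : ℝ := ∑ᶠ a, Real.negMulLog (p a)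

/-- `p` is a (finitely supported) probability distribution. -/
def IsDist {A : Type*} (p : A → ℝ) : Prop := (∀ a, 0 ≤ p a) ∧ ∑ᶠ a, p a = 1

/-- Pushforward of a distribution along a map: the distribution of `f(X)` for `X ∼ p`. -/
def push {A B : Type*} (f : A → B) (p : A → ℝ) : B → ℝ := fun b => ∑ᶠ a ∈ f ⁻¹' {b}, p a

/-- Joint distribution of a pair of independent random variables. -/
def prodDist {A B : Type*} (p : A → ℝ) (q : B → ℝ) : A × B → ℝ := fun z => p z.1 * q z.2

/-- Distribution of `X + Y` for independent `X ∼ p`, `Y ∼ q`. -/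
def conv {A : Type*} [AddGroup A] (p q : A → ℝ) : A → ℝ := fun z => ∑ᶠ x, p x * q (z - x)

/-- The distribution of `X` conditioned on `U = b`, where `r` is the joint distribution of `(X, U)`. -/
def fiber {A B : Type*} (r : A × B → ℝ) (b : B) : A → ℝ := fun a => r (a, b) / push Prod.snd r b

/-- Conditional entropy `H[X | U]` of a joint distribution `r` of `(X, U)`. -/
def condEnt {A B : Type*} (r : A × B → ℝ) : ℝ := ∑ᶠ b, push Prod.snd r b * ent (fiber r b)

/-- Doubling mass `s[X ; Y]` (of independent copies with distributions `p`, `q`). -/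
def sDouble {A : Type*} [AddGroup A] (p q : A → ℝ) : ℝ := ent p + ent q - ent (conv p q)

/-- Conditional doubling mass `s[X | U ; Y | W] = 𝔼_{u ∼ U, w ∼ W} s[X_u ; Y_w]`,
where `r1`, `r2` are the joint distributions of `(X, U)` and `(Y, W)`. -/
def sCond {A U W : Type*} [AddGroup A] (r1 : A × U → ℝ) (r2 : A × W → ℝ) : ℝ :=
  ∑ᶠ u, ∑ᶠ w, push Prod.snd r1 u * push Prod.snd r2 w * sDouble (fiber r1 u) (fiber r2 w)

/-- Conditional mutual information `I[A : B | S]` of a joint distribution of `(A, B, S)`. -/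
def condMI {A B S : Type*} (r : A × B × S → ℝ) : ℝ :=
  ent (push (fun z => (z.1, z.2.2)) r) + ent (push (fun z => z.2) r)
    - ent r - ent (push (fun z => z.2.2) r)

/-- Uniform distribution on a set. -/
def unifOn {A : Type*} (s : Set A) : A → ℝ := s.indicator fun _ => (Nat.card s : ℝ)⁻¹

/-- Entropic Ruzsa distance `d[X ; Y]`. -/
def dRuzsa {A : Type*} [AddGroup A] (p q : A → ℝ) : ℝ := ent (conv p q) - ent p / 2 - ent q / 2

/-- Joint distribution of `(X, X + Y)` for independent `X ∼ p`, `Y ∼ q`. -/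
def jointSum {A : Type*} [AddGroup A] (p q : A → ℝ) : A × A → ℝ :=
  push (fun z : A × A => (z.1, z.1 + z.2)) (prodDist p q)

/-- Joint distribution of `(X, π_V(X))`. -/
def selfProj {n : ℕ} (V : Submodule (ZMod 2) (Fvec n)) (p : Fvec n → ℝ) :
    Fvec n × (Fvec n ⧸ V) → ℝ := push (fun x => (x, V.mkQ x)) p

/-- Joint distribution of independent `(X₁, X₂, Y₁, Y₂)` with `X₁, X₂ ∼ p` and `Y₁, Y₂ ∼ q`. -/
def quad {A : Type*} (p q : A → ℝ) : A × A × A × A → ℝ :=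
  fun z => p z.1 * p z.2.1 * q z.2.2.1 * q z.2.2.2

/-- Distribution of `X₁ + ⋯ + X_k` for independent `Xᵢ ∼ p i`. -/
def indepSum {A : Type*} [AddCommGroup A] (k : ℕ) (p : Fin k → A → ℝ) : A → ℝ :=
  push (fun x : Fin k → A => ∑ i, x i) (fun x => ∏ i, p i (x i))

/-- Statement `A(η, L, c)` from the paper. -/
def StA (η L c : ℝ) : Prop :=
  ∀ (n : ℕ) (p q : Fvec n → ℝ), IsDist p → IsDist q →
    ent (conv p q) ≤ (1 - η) * (ent p + ent q) →
    ∃ V : Submodule (ZMod 2) (Fvec n),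
      ent (unifOn (V : Set (Fvec n))) ≤ L * (ent p + ent q) ∧
      ent (push V.mkQ p) + ent (push V.mkQ q) ≤ (1 - c) * (ent p + ent q)

/-- Statement `B(η, ε, L)` from the paper. -/
def StB (η ε L : ℝ) : Prop :=
  ∀ (n : ℕ) (p q : Fvec n → ℝ), IsDist p → IsDist q →
    ∃ V : Submodule (ZMod 2) (Fvec n),
      ent (unifOn (V : Set (Fvec n))) ≤ L * (ent p + ent q) ∧
      ent (conv (push V.mkQ p) (push V.mkQ q)) ≥
        (1 - η) * (ent (push V.mkQ p) + ent (push V.mkQ q)) - ε * (ent p + ent q)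

/-!
Call `X` and `Y` jointly `κ`-rigid if `H[X | π_V(X)] + H[Y | π_V(Y)] ≤ κ log |V|` for every `V`.
Passing to the quotient by the `V` that minimises `H[π_V(X)] + H[π_V(Y)] + κ log |V|` makes every
pair rigid, at the price of `log |V| ≤ κ⁻¹ (H[X] + H[Y])`. Since the fibring inequality gives
`s[X ; Y] ≤ H[X | π_V(X)] + s[π_V(X) ; π_V(Y)]`, and likewise with `H[Y | π_V(Y)]`, it suffices to
find, for every `η > 0`, some `κ > 0` such that `s[X ; Y] ≤ η (H[X] + H[Y])` for all jointly
`κ`-rigid pairs.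

For some `η < 1 / 2` this follows from a weak inverse theorem: if `d[X ; Y]` is small compared with
`H[X]`, then `H[X | π_V(X)] > (log |V|) / 2` for some `V`. Indeed, a minimiser `(A, B)` of
`d[A ; B] + (d[X ; A] + d[X ; B]) / 32` has `d[A ; B] = 0`, so that `A` is uniform on a coset of a
subspace `V`, while `d[X ; B]` is small.

To see that the infimum `m` of all admissible `η` is zero, take a rigid pair for which `s[X ; Y]` is
close to `m (H[X] + H[Y])`, independent copies `Zᵢ` of `X + Y`, and `U = Z₁ + Z₂`. Extremality
yields `s[U ; U] ≈ 2m H[U]` and forces `I[Z₁ + Z₂ : Z₂ + Z₃ | Z₁ + Z₂ + Z₃ + Z₄] ≈ 0`. The variable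
`U`, conditioned on `Z₂ + Z₃` and `Z₁ + Z₂ + Z₃ + Z₄`, has entropy about `s[U ; U]`. By the weak
inverse theorem it has small entropy modulo a subspace `V`; by rigidity, an independent copy `C` of
it, with its own conditioning, satisfies `H[C | π_V(C)] ≈ 0`. Hence the sum of two such conditioned
variables has entropy about `2 s[U ; U]`. By fibring, this is at most the doubling of the sum of two
copies of `U`, that is, about `2m (2 H[U] - s[U ; U])`, which is impossible if `m > 0`.
-/

universe u v

section Laws

variable {Ω Ω' α β γ : Type*}

/-- The expectation `𝔼 F(X)` for `X ∼ P`. -/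
def mean (P F : α → ℝ) : ℝ := ∑ᶠ a, P a * F a

lemma mean_eq_sum [Fintype α] (P F : α → ℝ) : mean P F = ∑ a, P a * F a :=
  finsum_eq_sum_of_fintype _

lemma push_eq_mean (X : Ω → α) [DecidableEq α] (μ : Ω → ℝ) (a : α) :
    push X μ a = mean μ fun ω => if X ω = a then 1 else 0 :=
  finsum_congr fun ω => by
    simp only [Set.mem_preimage, Set.mem_singleton_iff, finsum_eq_if, mul_ite, mul_one, mul_zero]

lemma mean_congr_of_support {P F F' : α → ℝ} (h : ∀ a, P a ≠ 0 → F a = F' a) :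
    mean P F = mean P F' := by
  refine finsum_congr fun a => ?_
  rcases eq_or_ne (P a) 0 with h0 | h0
  · simp only [h0, zero_mul]
  · rw [h a h0]

lemma push_nonneg {μ : Ω → ℝ} (hμ : ∀ ω, 0 ≤ μ ω) (X : Ω → α) (a : α) : 0 ≤ push X μ a :=
  finsum_nonneg fun ω => finsum_nonneg fun _ => hμ ω

lemma isDist_iff_mean {P : α → ℝ} :
    IsDist P ↔ (∀ a, 0 ≤ P a) ∧ mean P (fun _ => 1) = 1 := by
  simp only [IsDist, mean, mul_one]

variable [Finite Ω] [Finite Ω'] [Finite α] [Finite β] [Finite γ]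

lemma mean_add (P F F' : α → ℝ) : mean P (fun a => F a + F' a) = mean P F + mean P F' := by
  cases nonempty_fintype α
  simp only [mean_eq_sum, mul_add, Finset.sum_add_distrib]

lemma mean_const_mul (P : α → ℝ) (c : ℝ) (F : α → ℝ) :
    mean P (fun a => c * F a) = c * mean P F := by
  cases nonempty_fintype α
  simp only [mean_eq_sum, Finset.mul_sum, mul_left_comm]

lemma mean_sub (P F F' : α → ℝ) : mean P (fun a => F a - F' a) = mean P F - mean P F' := by
  cases nonempty_fintype α
  simp only [mean_eq_sum, mul_sub, Finset.sum_sub_distrib]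

lemma mean_comm (P : α → ℝ) (Q : β → ℝ) (F : α → β → ℝ) :
    mean P (fun a => mean Q (F a)) = mean Q fun b => mean P fun a => F a b := by
  cases nonempty_fintype α
  cases nonempty_fintype β
  simp only [mean_eq_sum, Finset.mul_sum]
  rw [Finset.sum_comm]
  simp only [mul_left_comm]

lemma mean_mono_of_support {P F F' : α → ℝ} (hP : ∀ a, 0 ≤ P a)
    (h : ∀ a, P a ≠ 0 → F a ≤ F' a) : mean P F ≤ mean P F' := by
  cases nonempty_fintype α
  simp only [mean_eq_sum]
  refine Finset.sum_le_sum fun a _ => ?_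
  rcases eq_or_ne (P a) 0 with h0 | h0
  · simp only [h0, zero_mul, le_refl]
  · exact mul_le_mul_of_nonneg_left (h a h0) (hP a)

lemma mean_mono {P F F' : α → ℝ} (hP : ∀ a, 0 ≤ P a) (h : ∀ a, F a ≤ F' a) :
    mean P F ≤ mean P F' :=
  mean_mono_of_support hP fun a _ => h a

lemma eq_of_mean_eq {P Q : α → ℝ} (h : ∀ F, mean P F = mean Q F) : P = Q := by
  classical
  cases nonempty_fintype α
  funext a
  simpa [mean_eq_sum, Pi.single_apply] using h (Pi.single a 1)

lemma mean_push (X : Ω → α) (μ : Ω → ℝ) (F : α → ℝ) :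
    mean (push X μ) F = mean μ fun ω => F (X ω) := by
  classical
  cases nonempty_fintype Ω
  cases nonempty_fintype α
  simp only [mean_eq_sum, push_eq_mean, Finset.sum_mul, mul_ite, mul_one, mul_zero, ite_mul,
    zero_mul]
  rw [Finset.sum_comm]
  simp only [Finset.sum_ite_eq, Finset.mem_univ, if_true]

lemma mean_prodDist (P : α → ℝ) (Q : β → ℝ) (F : α × β → ℝ) :
    mean (prodDist P Q) F = mean P fun a => mean Q fun b => F (a, b) := by
  cases nonempty_fintype α
  cases nonempty_fintype β
  simp only [mean_eq_sum, prodDist, Fintype.sum_prod_type, Finset.mul_sum, mul_assoc]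

namespace IsDist

lemma mean_const {P : α → ℝ} (hP : IsDist P) (c : ℝ) : mean P (fun _ => c) = c := by
  simpa only [mul_one, (isDist_iff_mean.1 hP).2] using mean_const_mul P c fun _ => 1

lemma push {μ : Ω → ℝ} (hμ : IsDist μ) (X : Ω → α) : IsDist (push X μ) :=
  isDist_iff_mean.2 ⟨push_nonneg hμ.1 X, by rw [mean_push, hμ.mean_const]⟩

lemma prodDist {P : α → ℝ} {Q : β → ℝ} (hP : IsDist P) (hQ : IsDist Q) :
    IsDist (prodDist P Q) :=
  isDist_iff_mean.2 ⟨fun z => mul_nonneg (hP.1 z.1) (hQ.1 z.2), by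
    rw [mean_prodDist, hQ.mean_const, hP.mean_const]⟩

end IsDist

lemma push_id (μ : Ω → ℝ) : push (fun ω => ω) μ = μ :=
  eq_of_mean_eq fun F => by rw [mean_push]

lemma push_push (g : α → β) (X : Ω → α) (μ : Ω → ℝ) :
    push g (push X μ) = push (fun ω => g (X ω)) μ :=
  eq_of_mean_eq fun F => by simp only [mean_push]

lemma push_prodMap (X : Ω → α) (Y : Ω' → β) (μ : Ω → ℝ) (ν : Ω' → ℝ) :
    push (Prod.map X Y) (prodDist μ ν) = prodDist (push X μ) (push Y ν) :=
  eq_of_mean_eq fun F => by simp only [mean_push, mean_prodDist, Prod.map_apply]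

lemma push_comp_fst (X : Ω → α) (μ : Ω → ℝ) {ν : Ω' → ℝ} (hν : IsDist ν) :
    push (fun ω => X ω.1) (prodDist μ ν) = push X μ :=
  eq_of_mean_eq fun F => by simp only [mean_push, mean_prodDist, hν.mean_const]

lemma push_comp_snd {μ : Ω → ℝ} (hμ : IsDist μ) (Y : Ω' → β) (ν : Ω' → ℝ) :
    push (fun ω => Y ω.2) (prodDist μ ν) = push Y ν :=
  eq_of_mean_eq fun F => by simp only [mean_push, mean_prodDist, hμ.mean_const]

section Convolution

variable {G G' : Type*} [AddCommGroup G] [Finite G] [AddCommGroup G'] [Finite G']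

lemma mean_conv (p q F : G → ℝ) :
    mean (conv p q) F = mean p fun x => mean q fun y => F (x + y) := by
  cases nonempty_fintype G
  simp only [mean_eq_sum, conv, finsum_eq_sum_of_fintype, Finset.sum_mul, Finset.mul_sum]
  rw [Finset.sum_comm]
  refine Finset.sum_congr rfl fun x _ => ?_
  rw [← Equiv.sum_comp (Equiv.addLeft x)]
  simp only [Equiv.coe_addLeft, add_sub_cancel_left, mul_assoc]

lemma push_add (X : Ω → G) (Y : Ω' → G) (μ : Ω → ℝ) (ν : Ω' → ℝ) :
    push (fun ω => X ω.1 + Y ω.2) (prodDist μ ν) = conv (push X μ) (push Y ν) :=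
  eq_of_mean_eq fun F => by simp only [mean_push, mean_prodDist, mean_conv]

lemma conv_eq_push (p q : G → ℝ) : conv p q = push (fun z => z.1 + z.2) (prodDist p q) := by
  simpa only [push_id] using (push_add (fun x => x) (fun y => y) p q).symm

lemma IsDist.conv {p q : G → ℝ} (hp : IsDist p) (hq : IsDist q) : IsDist (conv p q) :=
  conv_eq_push p q ▸ (hp.prodDist hq).push _

lemma conv_comm (p q : G → ℝ) : conv p q = conv q p :=
  eq_of_mean_eq fun F => by simp only [mean_conv, mean_comm p q, add_comm]

lemma conv_assoc (p q r : G → ℝ) : conv (conv p q) r = conv p (conv q r) :=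
  eq_of_mean_eq fun F => by simp only [mean_conv, add_assoc]

lemma push_conv {Φ : Type*} [FunLike Φ G G'] [AddMonoidHomClass Φ G G'] (φ : Φ) (p q : G → ℝ) :
    push φ (conv p q) = conv (push φ p) (push φ q) :=
  eq_of_mean_eq fun F => by simp only [mean_push, mean_conv, map_add]

end Convolution

end Laws

section ConditionalLaw

variable {Ω α β τ : Type*}

/-- The law of `(X, T)` when `T ∼ P` and, given `T = t`, the law of `X` is `f t`. -/
def joint (P : τ → ℝ) (f : τ → α → ℝ) : α × τ → ℝ := fun z => P z.2 * f z.2 z.1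

open Classical in
/-- The law of `X` conditioned on `T = t`. At the values `t` that `T` does not take it is set to be
the law of `X`, so that it is a probability distribution for every `t`. -/
def condLaw (μ : Ω → ℝ) (X : Ω → α) (T : Ω → τ) (t : τ) : α → ℝ :=
  if push T μ t = 0 then push X μ else fiber (push (fun ω => (X ω, T ω)) μ) t

variable [Finite Ω] [Finite α] [Finite β] [Finite τ]

lemma mean_joint (P : τ → ℝ) (f : τ → α → ℝ) (F : α × τ → ℝ) :
    mean (joint P f) F = mean P fun t => mean (f t) fun a => F (a, t) := by
  cases nonempty_fintype α
  cases nonempty_fintype τ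
  simp only [mean_eq_sum, joint, Fintype.sum_prod_type_right, Finset.mul_sum, mul_assoc]

lemma IsDist.joint {P : τ → ℝ} (hP : IsDist P) {f : τ → α → ℝ} (hf : ∀ t, IsDist (f t)) :
    IsDist (joint P f) :=
  isDist_iff_mean.2 ⟨fun z => mul_nonneg (hP.1 z.2) ((hf z.2).1 z.1), by
    simp only [mean_joint, (hf _).mean_const, hP.mean_const]⟩

lemma ent_joint (P : τ → ℝ) {f : τ → α → ℝ} (hf : ∀ t, IsDist (f t)) :
    ent (joint P f) = ent P + mean P fun t => ent (f t) := by
  cases nonempty_fintype α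
  cases nonempty_fintype τ
  have hsum (t : τ) : ∑ a, f t a = 1 := by
    simpa only [finsum_eq_sum_of_fintype] using (hf t).2
  simp only [ent, mean, finsum_eq_sum_of_fintype, joint, Fintype.sum_prod_type_right,
    negMulLog_mul, Finset.sum_add_distrib, ← Finset.sum_mul, ← Finset.mul_sum, hsum, one_mul]

lemma mean_fiber [DecidableEq τ] (r : α × τ → ℝ) (t : τ) (F : α → ℝ) :
    mean (fiber r t) F = mean r (fun z => if z.2 = t then F z.1 else 0) / push Prod.snd r t := by
  cases nonempty_fintype α
  cases nonempty_fintype τ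
  simp only [mean_eq_sum, fiber, Fintype.sum_prod_type, mul_ite, mul_zero, Finset.sum_ite_eq',
    Finset.mem_univ, if_true, Finset.sum_div, div_mul_eq_mul_div]

lemma isDist_fiber {r : α × τ → ℝ} (hr : ∀ z, 0 ≤ r z) {t : τ} (ht : push Prod.snd r t ≠ 0) :
    IsDist (fiber r t) := by
  classical
  refine isDist_iff_mean.2 ⟨fun a => div_nonneg (hr _) (push_nonneg hr _ _), ?_⟩
  rw [mean_fiber, ← push_eq_mean, div_self ht]

lemma push_snd_pair (μ : Ω → ℝ) (X : Ω → α) (T : Ω → τ) :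
    push Prod.snd (push (fun ω => (X ω, T ω)) μ) = push T μ :=
  push_push _ _ _

variable {μ : Ω → ℝ}

lemma IsDist.condLaw (hμ : IsDist μ) (X : Ω → α) (T : Ω → τ) (t : τ) :
    IsDist (condLaw μ X T t) := by
  rw [_root_.condLaw]
  split_ifs with ht
  · exact hμ.push X
  · exact isDist_fiber (hμ.push _).1 (by rwa [push_snd_pair])

lemma push_condLaw (μ : Ω → ℝ) (φ : α → β) (X : Ω → α) (T : Ω → τ) (t : τ) :
    push φ (condLaw μ X T t) = condLaw μ (fun ω => φ (X ω)) T t := by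
  classical
  unfold condLaw
  split_ifs
  · exact push_push _ _ _
  · refine eq_of_mean_eq fun F => ?_
    simp only [mean_push, mean_fiber, push_snd_pair]

lemma joint_condLaw (hμ : IsDist μ) (X : Ω → α) (T : Ω → τ) :
    joint (push T μ) (condLaw μ X T) = push (fun ω => (X ω, T ω)) μ := by
  classical
  funext ⟨a, t⟩
  by_cases ht : push T μ t = 0
  · have hle : push (fun ω => (X ω, T ω)) μ (a, t) ≤ push T μ t := by
      simp only [push_eq_mean]
      refine mean_mono hμ.1 fun ω => ?_
      split_ifs <;> simp_all
    rw [joint, ht, zero_mul]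
    exact le_antisymm ((hμ.push _).1 _) (hle.trans ht.le)
  · simp only [joint, condLaw, fiber, if_neg ht, push_snd_pair, mul_div_cancel₀ _ ht]

lemma mean_condLaw (hμ : IsDist μ) (X : Ω → α) (T : Ω → τ) (F : τ → α → ℝ) :
    (mean (push T μ) fun t => mean (condLaw μ X T t) (F t)) = mean μ fun ω => F (T ω) (X ω) := by
  rw [← mean_joint _ _ fun z => F z.2 z.1, joint_condLaw hμ, mean_push]

end ConditionalLaw

section Entropy

variable {Ω α β τ : Type*}

/-- The entropy `H[X]` of a random variable `X` on the probability space `(Ω, μ)`. -/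
def rvEnt (μ : Ω → ℝ) (X : Ω → α) : ℝ := ent (push X μ)

/-- The conditional entropy `H[X | T]` of random variables on `(Ω, μ)`, defined through the chain
rule. -/
def rvCondEnt (μ : Ω → ℝ) (X : Ω → α) (T : Ω → τ) : ℝ :=
  rvEnt μ (fun ω => (X ω, T ω)) - rvEnt μ T

lemma ent_eq_mean (p : α → ℝ) : ent p = mean p fun a => -log (p a) :=
  finsum_congr fun a => by rw [negMulLog, neg_mul_comm]

variable [Finite Ω] {μ : Ω → ℝ}

lemma le_push_apply (hμ : ∀ ω, 0 ≤ μ ω) (X : Ω → α) (ω : Ω) : μ ω ≤ push X μ (X ω) := by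
  classical
  rw [← congrFun (push_id μ) ω, push_eq_mean, push_eq_mean]
  refine mean_mono hμ fun ω' => ?_
  split_ifs <;> simp_all

variable [Finite α] [Finite β] [Finite τ]

lemma rvEnt_eq_mean (μ : Ω → ℝ) (X : Ω → α) :
    rvEnt μ X = mean μ fun ω => -log (push X μ (X ω)) := by
  rw [rvEnt, ent_eq_mean, mean_push]

lemma rvEnt_le_of_factorsThrough (hμ : IsDist μ) {X : Ω → α} {Y : Ω → β}
    (h : Y.FactorsThrough X) : rvEnt μ Y ≤ rvEnt μ X := by
  classical
  rw [rvEnt_eq_mean, rvEnt_eq_mean]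
  refine mean_mono_of_support hμ.1 fun ω hω => neg_le_neg (log_le_log ?_ ?_)
  · exact ((hμ.1 ω).lt_of_ne' hω).trans_le (le_push_apply hμ.1 X ω)
  · rw [push_eq_mean, push_eq_mean]
    refine mean_mono hμ.1 fun ω' => ?_
    split_ifs with hX hY
    exacts [le_rfl, absurd (h hX) hY, zero_le_one, le_rfl]

lemma rvEnt_congr (hμ : IsDist μ) {X : Ω → α} {Y : Ω → β} (hXY : X.FactorsThrough Y)
    (hYX : Y.FactorsThrough X) : rvEnt μ X = rvEnt μ Y :=
  (rvEnt_le_of_factorsThrough hμ hXY).antisymm (rvEnt_le_of_factorsThrough hμ hYX)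

lemma rvEnt_id (p : α → ℝ) : rvEnt p (fun a => a) = ent p := by
  rw [rvEnt, push_id]

lemma ent_push_le (hμ : IsDist μ) (X : Ω → α) : ent (push X μ) ≤ ent μ :=
  (rvEnt_le_of_factorsThrough hμ fun _ _ h => congrArg X h).trans_eq (rvEnt_id μ)

lemma ent_push_of_injective (hμ : IsDist μ) {X : Ω → α} (hX : X.Injective) :
    ent (push X μ) = ent μ :=
  (ent_push_le hμ X).antisymm
    ((rvEnt_id μ).symm.le.trans (rvEnt_le_of_factorsThrough hμ fun _ _ h => hX h))

lemma ent_nonneg {p : α → ℝ} (hp : IsDist p) : 0 ≤ ent p := by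
  rw [ent_eq_mean, ← hp.mean_const 0]
  cases nonempty_fintype α
  refine mean_mono hp.1 fun a => neg_nonneg.2 (log_nonpos (hp.1 a) ?_)
  rw [← hp.2, finsum_eq_sum_of_fintype]
  exact Finset.single_le_sum (fun b _ => hp.1 b) (Finset.mem_univ a)

lemma ent_le_mean_neg_log {p q : α → ℝ} (hp : IsDist p) (hq : IsDist q)
    (hpq : ∀ a, q a = 0 → p a = 0) : ent p ≤ mean p fun a => -log (q a) := by
  cases nonempty_fintype α
  have hp1 := hp.2
  have hq1 := hq.2
  have hle (a : α) : negMulLog (p a) ≤ p a * -log (q a) + (q a - p a) := by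
    rcases (hp.1 a).eq_or_lt' with ha | ha
    · simpa only [ha, negMulLog_zero, zero_mul, zero_add, sub_zero] using hq.1 a
    · have hqa : 0 < q a := (hq.1 a).lt_of_ne' fun h => ha.ne' (hpq a h)
      have hlog := mul_le_mul_of_nonneg_left (log_le_sub_one_of_pos (div_pos hqa ha)) ha.le
      rw [log_div hqa.ne' ha.ne', mul_sub, mul_sub, mul_div_cancel₀ _ ha.ne'] at hlog
      rw [negMulLog]
      linarith
  rw [finsum_eq_sum_of_fintype] at hp1 hq1
  calc ent p ≤ ∑ a, (p a * -log (q a) + (q a - p a)) := by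
        rw [ent, finsum_eq_sum_of_fintype]
        exact Finset.sum_le_sum fun a _ => hle a
    _ = mean p fun a => -log (q a) := by
        rw [Finset.sum_add_distrib, Finset.sum_sub_distrib, hp1, hq1, sub_self, add_zero,
          mean_eq_sum]

lemma ent_pair_le {r : α × β → ℝ} (hr : IsDist r) :
    ent r ≤ ent (push Prod.fst r) + ent (push Prod.snd r) := by
  have hfst (z : α × β) : r z ≤ push Prod.fst r z.1 := le_push_apply hr.1 Prod.fst z
  have hsnd (z : α × β) : r z ≤ push Prod.snd r z.2 := le_push_apply hr.1 Prod.snd z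
  calc ent r ≤ mean r fun z => -log (prodDist (push Prod.fst r) (push Prod.snd r) z) := by
        refine ent_le_mean_neg_log hr ((hr.push _).prodDist (hr.push _)) fun z hz => ?_
        rcases mul_eq_zero.1 hz with h | h
        exacts [le_antisymm ((hfst z).trans_eq h) (hr.1 z),
          le_antisymm ((hsnd z).trans_eq h) (hr.1 z)]
    _ = mean r fun z => -log (push Prod.fst r z.1) + -log (push Prod.snd r z.2) := by
        refine mean_congr_of_support fun z hz => ?_
        have hpos : 0 < r z := (hr.1 z).lt_of_ne' hz
        rw [prodDist, log_mul (hpos.trans_le (hfst z)).ne' (hpos.trans_le (hsnd z)).ne', neg_add]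
    _ = ent (push Prod.fst r) + ent (push Prod.snd r) := by
        rw [mean_add]
        exact congrArg₂ _ (rvEnt_eq_mean r Prod.fst).symm (rvEnt_eq_mean r Prod.snd).symm

lemma mean_ent_condLaw (hμ : IsDist μ) (X : Ω → α) (T : Ω → τ) :
    (mean (push T μ) fun t => ent (condLaw μ X T t)) = rvCondEnt μ X T := by
  rw [rvCondEnt, rvEnt, rvEnt, ← joint_condLaw hμ, ent_joint _ (hμ.condLaw X T),
    add_sub_cancel_left]

lemma rvCondEnt_nonneg (hμ : IsDist μ) (X : Ω → α) (T : Ω → τ) : 0 ≤ rvCondEnt μ X T :=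
  sub_nonneg.2 (rvEnt_le_of_factorsThrough hμ fun _ _ h => congrArg Prod.snd h)

lemma rvCondEnt_le_rvEnt (hμ : IsDist μ) (X : Ω → α) (T : Ω → τ) :
    rvCondEnt μ X T ≤ rvEnt μ X := by
  have h := ent_pair_le (hμ.push fun ω => (X ω, T ω))
  rw [push_push, push_push] at h
  rw [rvCondEnt, rvEnt, rvEnt, rvEnt]
  linarith

lemma rvCondEnt_pair_le (hμ : IsDist μ) (X : Ω → α) (Y : Ω → β) (T : Ω → τ) :
    rvCondEnt μ (fun ω => (X ω, Y ω)) T ≤ rvCondEnt μ X T + rvCondEnt μ Y T := by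
  simp only [← mean_ent_condLaw hμ, ← mean_add]
  refine mean_mono (hμ.push T).1 fun t => ?_
  simpa only [push_condLaw] using ent_pair_le (hμ.condLaw (fun ω => (X ω, Y ω)) T t)

lemma rvCondEnt_le_of_factorsThrough (hμ : IsDist μ) (X : Ω → α) {S : Ω → β} {T : Ω → τ}
    (h : T.FactorsThrough S) : rvCondEnt μ X S ≤ rvCondEnt μ X T := by
  have hsub := rvCondEnt_pair_le hμ X S T
  have hXS : rvEnt μ (fun ω => (X ω, S ω)) ≤ rvEnt μ fun ω => ((X ω, S ω), T ω) :=
    rvEnt_le_of_factorsThrough hμ fun _ _ h => congrArg Prod.fst h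
  have hST : rvEnt μ (fun ω => (S ω, T ω)) ≤ rvEnt μ S :=
    rvEnt_le_of_factorsThrough hμ fun _ _ hS => Prod.ext hS (h hS)
  simp only [rvCondEnt] at hsub ⊢
  linarith

lemma ent_prodDist {p : α → ℝ} {q : β → ℝ} (hp : IsDist p) (hq : IsDist q) :
    ent (prodDist p q) = ent p + ent q := by
  have hjoint : prodDist p q = joint q fun _ => p := funext fun z => mul_comm _ _
  rw [hjoint, ent_joint q fun _ => hp, hq.mean_const, add_comm]

end Entropy

section SumEntropy

variable {Ω Ω' α β τ τ' G : Type*} [Finite Ω] [Finite Ω'] [Finite α] [Finite β] [Finite τ]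
  [Finite τ'] [AddCommGroup G] [Finite G]

lemma rvEnt_prodDist_of_injective {p : α → ℝ} {q : β → ℝ} (hp : IsDist p) (hq : IsDist q)
    {φ : α × β → τ} (hφ : φ.Injective) : rvEnt (prodDist p q) φ = ent p + ent q := by
  rw [rvEnt, ent_push_of_injective (hp.prodDist hq) hφ, ent_prodDist hp hq]

lemma ent_conv_le_add {p q : G → ℝ} (hp : IsDist p) (hq : IsDist q) :
    ent (conv p q) ≤ ent p + ent q := by
  rw [conv_eq_push, ← ent_prodDist hp hq]
  exact ent_push_le (hp.prodDist hq) _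

lemma kaimanovich_vershik {p q r : G → ℝ} (hp : IsDist p) (hq : IsDist q) (hr : IsDist r) :
    ent (conv p (conv q r)) + ent q ≤ ent (conv p q) + ent (conv q r) := by
  have hqr := hq.prodDist hr
  have hμ := hp.prodDist hqr
  have hcond := rvCondEnt_le_of_factorsThrough hμ (fun ω => ω.1)
    (S := fun ω => (ω.1 + ω.2.1, ω.2.2)) (T := fun ω => ω.1 + (ω.2.1 + ω.2.2))
    (fun ω ω' h => by grind)
  have hall : rvEnt (prodDist p (prodDist q r)) (fun ω => (ω.1, ω.1 + ω.2.1, ω.2.2)) =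
      ent p + (ent q + ent r) := by
    rw [rvEnt_prodDist_of_injective hp hqr, ent_prodDist hq hr]
    intro ω ω' h
    grind [Prod.ext_iff]
  have hpair : rvEnt (prodDist p (prodDist q r)) (fun ω => (ω.1 + ω.2.1, ω.2.2)) =
      ent (conv p q) + ent r := by
    rw [← ent_prodDist (hp.conv hq) hr, rvEnt]
    congr 1
    exact eq_of_mean_eq fun F => by simp only [mean_push, mean_prodDist, mean_conv]
  have hsum : rvEnt (prodDist p (prodDist q r)) (fun ω => ω.1 + (ω.2.1 + ω.2.2)) =
      ent (conv p (conv q r)) := by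
    rw [rvEnt]
    congr 1
    exact eq_of_mean_eq fun F => by simp only [mean_push, mean_prodDist, mean_conv]
  have hfst : rvEnt (prodDist p (prodDist q r)) (fun ω => (ω.1, ω.1 + (ω.2.1 + ω.2.2))) =
      ent p + ent (conv q r) := by
    rw [← ent_prodDist hp (hq.conv hr),
      ← ent_push_of_injective (hp.prodDist (hq.conv hr)) (X := fun z => (z.1, z.1 + z.2))
        (fun _ _ _ => by grind [Prod.ext_iff]), rvEnt]
    congr 1
    exact eq_of_mean_eq fun F => by simp only [mean_push, mean_prodDist, mean_conv]
  simp only [rvCondEnt, hall, hpair, hsum, hfst] at hcond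
  linarith

lemma ent_le_ent_conv_right {p q : G → ℝ} (hp : IsDist p) (hq : IsDist q) :
    ent q ≤ ent (conv p q) := by
  have hcond := rvCondEnt_le_rvEnt (hp.prodDist hq) (fun z => z.1 + z.2) Prod.fst
  rw [rvCondEnt, rvEnt_prodDist_of_injective hp hq (fun _ _ _ => by grind [Prod.ext_iff]), rvEnt,
    rvEnt, ← conv_eq_push, push_comp_fst (fun x => x) p hq, push_id] at hcond
  linarith

lemma ent_le_ent_conv_left {p q : G → ℝ} (hp : IsDist p) (hq : IsDist q) :
    ent p ≤ ent (conv p q) :=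
  conv_comm q p ▸ ent_le_ent_conv_right hq hp

lemma ruzsa_triangle {p q r : G → ℝ} (hp : IsDist p) (hq : IsDist q) (hr : IsDist r) :
    ent (conv p r) + ent q ≤ ent (conv p q) + ent (conv q r) := by
  have hle : ent (conv p r) ≤ ent (conv p (conv q r)) := by
    rw [← conv_assoc, conv_comm p q, conv_assoc]
    exact ent_le_ent_conv_right hq (hp.conv hr)
  linarith [kaimanovich_vershik hp hq hr]

variable {μ : Ω → ℝ} {ν : Ω' → ℝ}

lemma joint_conv_condLaw (hμ : IsDist μ) (hν : IsDist ν) (X : Ω → G) (T : Ω → τ) (Y : Ω' → G)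
    (T' : Ω' → τ') :
    joint (prodDist (push T μ) (push T' ν))
        (fun t => conv (condLaw μ X T t.1) (condLaw ν Y T' t.2)) =
      push (fun ω => (X ω.1 + Y ω.2, T ω.1, T' ω.2)) (prodDist μ ν) := by
  refine eq_of_mean_eq fun F => ?_
  simp only [mean_joint, mean_prodDist, mean_push _ (prodDist μ ν), mean_conv]
  rw [← mean_condLaw hμ X T fun t x => mean ν fun ω => F (x + Y ω, t, T' ω)]
  congr 1
  funext t
  rw [mean_comm]
  congr 1
  funext x
  exact mean_condLaw hν Y T' fun t' y => F (x + y, t, t')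

lemma mean_ent_conv_condLaw (hμ : IsDist μ) (hν : IsDist ν) (X : Ω → G) (T : Ω → τ) (Y : Ω' → G)
    (T' : Ω' → τ') :
    (mean (push T μ) fun t => mean (push T' ν) fun t' =>
        ent (conv (condLaw μ X T t) (condLaw ν Y T' t'))) =
      rvCondEnt (prodDist μ ν) (fun ω => X ω.1 + Y ω.2) fun ω => (T ω.1, T' ω.2) := by
  have hT : push (fun ω : Ω × Ω' => (T ω.1, T' ω.2)) (prodDist μ ν) =
      prodDist (push T μ) (push T' ν) := push_prodMap T T' μ ν
  rw [rvCondEnt, rvEnt, rvEnt, hT, ← joint_conv_condLaw hμ hν,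
    ent_joint _ (f := fun t : τ × τ' => conv (condLaw μ X T t.1) (condLaw ν Y T' t.2))
      fun t => (hμ.condLaw X T t.1).conv (hν.condLaw Y T' t.2),
    add_sub_cancel_left, mean_prodDist]

lemma rvCondEnt_le_of_add_factorsThrough (hμ : IsDist μ) {X Y : Ω → G} {S : Ω → τ}
    (h : (X + Y).FactorsThrough S) :
    rvCondEnt μ X S ≤ rvEnt μ X + rvEnt μ Y - rvEnt μ (X + Y) := by
  have hpair : rvEnt μ (fun ω => (X ω, (X + Y) ω)) ≤ rvEnt μ fun ω => (X ω, Y ω) :=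
    rvEnt_le_of_factorsThrough hμ fun ω ω' _ => by grind [Pi.add_apply]
  have hsub := rvCondEnt_le_rvEnt hμ X Y
  calc rvCondEnt μ X S ≤ rvCondEnt μ X (X + Y) := rvCondEnt_le_of_factorsThrough hμ X h
    _ ≤ rvEnt μ X + rvEnt μ Y - rvEnt μ (X + Y) := by
        rw [rvCondEnt] at hsub ⊢
        linarith

lemma mean_ent_conv_condLaw_le_fibring (hμ : IsDist μ) (hν : IsDist ν) {X X' : Ω → G}
    {T : Ω → τ} {Y Y' : Ω' → G} {T' : Ω' → τ'} (hT : (X + X').FactorsThrough T)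
    (hT' : (Y + Y').FactorsThrough T') :
    (mean (push T μ) fun t => mean (push T' ν) fun t' =>
        ent (conv (condLaw μ X T t) (condLaw ν Y T' t'))) ≤
      ent (conv (push X μ) (push Y ν)) + ent (conv (push X' μ) (push Y' ν)) -
        ent (conv (push (X + X') μ) (push (Y + Y') ν)) := by
  rw [mean_ent_conv_condLaw hμ hν, ← push_add, ← push_add, ← push_add]
  have hsum : (fun ω : Ω × Ω' => (X + X') ω.1 + (Y + Y') ω.2) =
      (fun ω => X ω.1 + Y ω.2) + fun ω => X' ω.1 + Y' ω.2 :=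
    funext fun ω => add_add_add_comm _ _ _ _
  rw [hsum]
  refine rvCondEnt_le_of_add_factorsThrough (hμ.prodDist hν) ?_
  rw [← hsum]
  exact fun ω ω' h => congrArg₂ _ (hT (congrArg Prod.fst h)) (hT' (congrArg Prod.snd h))

/-- The law of `X` conditioned on `X + Y = s`, for independent `X ∼ p` and `Y ∼ q`. -/
def sumCond (p q : G → ℝ) (s : G) : G → ℝ :=
  condLaw (prodDist p q) Prod.fst (fun z => z.1 + z.2) s

lemma mean_ent_sumCond {p q : G → ℝ} (hp : IsDist p) (hq : IsDist q) :
    (mean (conv p q) fun s => ent (sumCond p q s)) = sDouble p q := by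
  rw [conv_eq_push]
  refine (mean_ent_condLaw (hp.prodDist hq) _ _).trans ?_
  rw [rvCondEnt, rvEnt_prodDist_of_injective hp hq (fun _ _ _ => by grind [Prod.ext_iff]), rvEnt,
    ← conv_eq_push, sDouble]

lemma IsDist.sumCond {p q : G → ℝ} (hp : IsDist p) (hq : IsDist q) (s : G) :
    IsDist (sumCond p q s) :=
  (hp.prodDist hq).condLaw _ _ s

end SumEntropy

section ConditionalCopies

variable {Ω α β γ τ G : Type*} [Finite Ω] [Finite α] [Finite β] [Finite γ] [Finite τ]
  [AddCommGroup G] [Finite G] {μ : Ω → ℝ}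

lemma conv_condLaw {p : G → ℝ} (hp : IsDist p) (μ : Ω → ℝ) (X : Ω → G) (T : Ω → τ) (t : τ) :
    conv p (condLaw μ X T t) =
      condLaw (prodDist p μ) (fun z => z.1 + X z.2) (fun z => T z.2) t := by
  classical
  have hT : push (fun z : G × Ω => T z.2) (prodDist p μ) = push T μ := push_comp_snd hp T μ
  unfold condLaw
  rw [hT]
  split_ifs
  · exact eq_of_mean_eq fun F => by simp only [mean_conv, mean_push, mean_prodDist]
  · refine eq_of_mean_eq fun F => ?_
    simp only [mean_conv, mean_fiber, mean_push, mean_prodDist, push_snd_pair, hT, div_eq_mul_inv,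
      mul_comm _ (push T μ t)⁻¹, mean_const_mul]

lemma mean_ent_conv_condLaw_right_le {p : G → ℝ} (hp : IsDist p) (hμ : IsDist μ) (X : Ω → G)
    (T : Ω → τ) :
    (mean (push T μ) fun t => ent (conv p (condLaw μ X T t))) ≤ ent (conv p (push X μ)) := by
  have hpμ := hp.prodDist hμ
  simp only [conv_condLaw hp]
  calc _ = rvCondEnt (prodDist p μ) (fun z => z.1 + X z.2) (fun z => T z.2) := by
        rw [← mean_ent_condLaw hpμ, push_comp_snd hp]
    _ ≤ rvEnt (prodDist p μ) (fun z => z.1 + X z.2) := rvCondEnt_le_rvEnt hpμ _ _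
    _ = ent (conv p (push X μ)) := by
        rw [rvEnt, push_add (fun x => x) X p μ, push_id]

lemma rvCondEnt_pair_add_le (hμ : IsDist μ) {X : Ω → α} {Y : Ω → β} {Z : Ω → γ} (S : Ω → τ)
    (hX : Z.FactorsThrough X) (hY : Z.FactorsThrough Y) :
    rvCondEnt μ (fun ω => (X ω, Y ω)) S + rvCondEnt μ Z S ≤
      rvCondEnt μ X S + rvCondEnt μ Y S := by
  have hsub := rvCondEnt_pair_le hμ X Y fun ω => (Z ω, S ω)
  have hXY : rvEnt μ (fun ω => ((X ω, Y ω), S ω)) ≤ rvEnt μ fun ω => ((X ω, Y ω), (Z ω, S ω)) :=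
    rvEnt_le_of_factorsThrough hμ fun _ _ h => by grind [Prod.ext_iff]
  have hXS : rvEnt μ (fun ω => (X ω, Z ω, S ω)) ≤ rvEnt μ fun ω => (X ω, S ω) :=
    rvEnt_le_of_factorsThrough hμ fun ω ω' h => by
      grind [Prod.ext_iff, Function.FactorsThrough]
  have hYS : rvEnt μ (fun ω => (Y ω, Z ω, S ω)) ≤ rvEnt μ fun ω => (Y ω, S ω) :=
    rvEnt_le_of_factorsThrough hμ fun ω ω' h => by
      grind [Prod.ext_iff, Function.FactorsThrough]
  simp only [rvCondEnt] at hsub ⊢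
  linarith

/-- The law of `((X₁, X₂), T)`, where `X₁` and `X₂` are copies of `X` that are independent
conditionally on `T`. -/
def condCopies (μ : Ω → ℝ) (X : Ω → α) (T : Ω → τ) : (α × α) × τ → ℝ :=
  joint (push T μ) fun t => prodDist (condLaw μ X T t) (condLaw μ X T t)

lemma IsDist.condCopies (hμ : IsDist μ) (X : Ω → α) (T : Ω → τ) : IsDist (condCopies μ X T) :=
  (hμ.push T).joint fun t => (hμ.condLaw X T t).prodDist (hμ.condLaw X T t)

lemma rvEnt_condCopies_fst (hμ : IsDist μ) (X : Ω → α) (T : Ω → τ) (φ : α → τ → β) :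
    rvEnt (condCopies μ X T) (fun z => φ z.1.1 z.2) = rvEnt μ fun ω => φ (X ω) (T ω) := by
  refine congrArg ent (eq_of_mean_eq fun F => ?_)
  simp only [condCopies, mean_push _ (joint _ _), mean_joint, mean_prodDist,
    (hμ.condLaw X T _).mean_const]
  rw [mean_condLaw hμ X T fun t x => F (φ x t), mean_push]

lemma rvEnt_condCopies_snd (hμ : IsDist μ) (X : Ω → α) (T : Ω → τ) (φ : α → τ → β) :
    rvEnt (condCopies μ X T) (fun z => φ z.1.2 z.2) = rvEnt μ fun ω => φ (X ω) (T ω) := by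
  refine congrArg ent (eq_of_mean_eq fun F => ?_)
  simp only [condCopies, mean_push _ (joint _ _), mean_joint, mean_prodDist,
    (hμ.condLaw X T _).mean_const]
  rw [mean_condLaw hμ X T fun t x => F (φ x t), mean_push]

lemma rvCondEnt_condCopies_fst (hμ : IsDist μ) (X : Ω → α) (T : Ω → τ) (φ : α → τ → β)
    (ψ : τ → γ) : rvCondEnt (condCopies μ X T) (fun z => φ z.1.1 z.2) (fun z => ψ z.2) =
      rvCondEnt μ (fun ω => φ (X ω) (T ω)) fun ω => ψ (T ω) :=
  congrArg₂ (· - ·) (rvEnt_condCopies_fst hμ X T fun x t => (φ x t, ψ t))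
    (rvEnt_condCopies_fst hμ X T fun _ t => ψ t)

lemma rvCondEnt_condCopies_snd (hμ : IsDist μ) (X : Ω → α) (T : Ω → τ) (φ : α → τ → β)
    (ψ : τ → γ) : rvCondEnt (condCopies μ X T) (fun z => φ z.1.2 z.2) (fun z => ψ z.2) =
      rvCondEnt μ (fun ω => φ (X ω) (T ω)) fun ω => ψ (T ω) :=
  congrArg₂ (· - ·) (rvEnt_condCopies_snd hμ X T fun x t => (φ x t, ψ t))
    (rvEnt_condCopies_snd hμ X T fun _ t => ψ t)

lemma rvCondEnt_joint (P : τ → ℝ) {f : τ → α → ℝ} (hf : ∀ t, IsDist (f t)) (φ : α → β) :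
    rvCondEnt (joint P f) (fun z => φ z.1) Prod.snd = mean P fun t => ent (push φ (f t)) := by
  have hpair : push (fun z => (φ z.1, z.2)) (joint P f) = joint P fun t => push φ (f t) :=
    eq_of_mean_eq fun F => by simp only [mean_push, mean_joint]
  have hsnd : push Prod.snd (joint P f) = P :=
    eq_of_mean_eq fun F => by simp only [mean_push, mean_joint, (hf _).mean_const]
  rw [rvCondEnt, rvEnt, rvEnt, hpair, hsnd, ent_joint P fun t => (hf t).push φ,
    add_sub_cancel_left]

lemma mean_ent_conv_self_condLaw (hμ : IsDist μ) (X : Ω → G) (T : Ω → τ) :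
    (mean (push T μ) fun t => ent (conv (condLaw μ X T t) (condLaw μ X T t))) =
      rvCondEnt (condCopies μ X T) (fun z => z.1.1 + z.1.2) Prod.snd := by
  simp only [conv_eq_push]
  exact (rvCondEnt_joint _ (fun t => (hμ.condLaw X T t).prodDist (hμ.condLaw X T t))
    fun x => x.1 + x.2).symm

lemma rvCondEnt_condCopies (hμ : IsDist μ) (X : Ω → α) (T : Ω → τ) :
    rvCondEnt (condCopies μ X T) Prod.fst Prod.snd = 2 * rvCondEnt μ X T := by
  have hf (t : τ) := hμ.condLaw X T t
  refine (rvCondEnt_joint _ (fun t => (hf t).prodDist (hf t)) fun x => x).trans ?_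
  simp only [push_id, ent_prodDist (hf _) (hf _), ← two_mul, mean_const_mul]
  rw [mean_ent_condLaw hμ]

lemma rvCondEnt_condCopies_sum_le (hμ : IsDist μ) (U W : Ω → G) (S : Ω → τ) :
    rvCondEnt (condCopies μ U fun ω => (W ω, S ω))
        (fun z => ((z.1.1, z.1.2 + z.2.1), (z.1.2, z.1.1 + z.2.1))) (fun z => z.2.2) +
      rvCondEnt (condCopies μ U fun ω => (W ω, S ω)) (fun z => z.1.1 + z.1.2 + z.2.1)
        (fun z => z.2.2) ≤
      2 * rvCondEnt μ U S + 2 * rvCondEnt μ (fun ω => U ω + W ω) S := by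
  have hκ := hμ.condCopies U fun ω => (W ω, S ω)
  have hsub := rvCondEnt_pair_add_le hκ (X := fun z => (z.1.1, z.1.2 + z.2.1))
    (Y := fun z => (z.1.2, z.1.1 + z.2.1)) (Z := fun z => z.1.1 + z.1.2 + z.2.1)
    (fun z => z.2.2) (fun z z' h => by grind) (fun z z' h => by grind)
  have hX := rvCondEnt_pair_le hκ (fun z => z.1.1) (fun z => z.1.2 + z.2.1) fun z => z.2.2
  have hY := rvCondEnt_pair_le hκ (fun z => z.1.2) (fun z => z.1.1 + z.2.1) fun z => z.2.2
  rw [rvCondEnt_condCopies_fst hμ U _ (fun x _ => x) Prod.snd,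
    rvCondEnt_condCopies_snd hμ U _ (fun x t => x + t.1) Prod.snd] at hX
  rw [rvCondEnt_condCopies_snd hμ U _ (fun x _ => x) Prod.snd,
    rvCondEnt_condCopies_fst hμ U _ (fun x t => x + t.1) Prod.snd] at hY
  linarith

/-- Submodularity is applied to the pairs `(U₁, U₂ + W)` and `(U₂, U₁ + W)`, each of which
determines `U₁ + U₂ + W`; here `U₁` and `U₂` are the conditional copies of `U`. -/
lemma mean_ent_conv_self_condLaw_le (hμ : IsDist μ) (U W : Ω → G) (S : Ω → τ) :
    (mean (push (fun ω => (W ω, S ω)) μ) fun t =>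
        ent (conv (condLaw μ U (fun ω => (W ω, S ω)) t) (condLaw μ U (fun ω => (W ω, S ω)) t))) ≤
      2 * rvCondEnt μ U S + 2 * rvCondEnt μ (fun ω => U ω + W ω) S -
        2 * rvCondEnt μ U (fun ω => (W ω, S ω)) - rvCondEnt μ W S := by
  rw [mean_ent_conv_self_condLaw hμ, ← rvCondEnt_condCopies hμ U fun ω => (W ω, S ω)]
  have hκ := hμ.condCopies U fun ω => (W ω, S ω)
  have hsum := rvCondEnt_condCopies_sum_le hμ U W S
  have hchain : rvCondEnt μ W S = rvCondEnt (condCopies μ U fun ω => (W ω, S ω))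
      (fun z => z.2.1) fun z => z.2.2 :=
    (rvCondEnt_condCopies_fst hμ U (fun ω => (W ω, S ω)) (fun _ t => t.1) Prod.snd).symm
  set κ := condCopies μ U fun ω => (W ω, S ω)
  have hall : rvEnt κ (fun z => (z.1, z.2)) ≤
      rvEnt κ (fun z => (((z.1.1, z.1.2 + z.2.1), (z.1.2, z.1.1 + z.2.1)), z.2.2)) :=
    rvEnt_le_of_factorsThrough hκ fun z z' h => by grind [Prod.ext_iff]
  have hZ : rvEnt κ (fun z => (z.1.1 + z.1.2, z.2)) ≤
      rvEnt κ fun z => (z.1.1 + z.1.2 + z.2.1, z.2) :=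
    rvEnt_le_of_factorsThrough hκ fun z z' h => by
      simp only [Prod.mk.injEq] at h ⊢
      exact ⟨add_right_cancel (h.1.trans (by rw [h.2])), h.2⟩
  have hmono := rvCondEnt_le_of_factorsThrough hκ (fun z => z.1.1 + z.1.2 + z.2.1)
    (S := Prod.snd) (T := fun z => z.2.2) fun z z' h => congrArg Prod.snd h
  have hpair : rvEnt κ Prod.snd = rvEnt κ fun z => (z.2.1, z.2.2) := rfl
  simp only [rvCondEnt] at hsum hchain hmono ⊢
  linarith [hpair]

end ConditionalCopies

section Noise

variable {G A B : Type*} [AddCommGroup G] [Finite G]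

lemma rvEnt_prodDist_fst_pair {α β γ : Type*} [Finite α] [Finite β] [Finite γ] {p : α → ℝ}
    {q : β → ℝ} (hp : IsDist p) (hq : IsDist q) (X : β → γ) :
    rvEnt (prodDist p q) (fun z => (z.1, X z.2)) = ent p + rvEnt q X := by
  have h := push_prodMap (fun x => x) X p q
  rw [push_id] at h
  exact (congrArg ent h).trans (ent_prodDist hp (hq.push X))

lemma rvEnt_conv {α : Type*} [Finite α] (p q : G → ℝ) (X : G → α) :
    rvEnt (conv p q) X = rvEnt (prodDist p q) fun z => X (z.1 + z.2) := by
  rw [rvEnt, conv_eq_push, push_push, rvEnt]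

lemma rvCondEnt_le_rvCondEnt_conv [AddCommGroup A] [Finite A] [AddCommGroup B] [Finite B]
    {p q : G → ℝ} (hp : IsDist p) (hq : IsDist q) (φ : G →+ A) (ψ : G →+ B) :
    rvCondEnt q φ ψ ≤ rvCondEnt (conv p q) φ ψ := by
  have hpq := hp.prodDist hq
  have hshift : rvEnt (prodDist p q) (fun z => (φ (z.1 + z.2), z.1, ψ z.2)) =
      rvEnt (prodDist p q) fun z => (z.1, φ z.2, ψ z.2) :=
    rvEnt_congr hpq (fun z z' h => by simp_all) fun z z' h => by
      simp only [map_add, Prod.mk.injEq] at h ⊢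
      exact ⟨h.2.1, add_left_cancel ((congrArg (φ · + _) h.2.1).symm.trans h.1), h.2.2⟩
  have hcond := rvCondEnt_le_of_factorsThrough hpq (fun z => φ (z.1 + z.2))
    (S := fun z => (z.1, ψ z.2)) (T := fun z => ψ (z.1 + z.2)) fun z z' h => by simp_all
  rw [rvCondEnt, hshift, rvEnt_prodDist_fst_pair hp hq ψ,
    rvEnt_prodDist_fst_pair hp hq fun y => (φ y, ψ y), add_sub_add_left_eq_sub] at hcond
  rwa [rvCondEnt, rvCondEnt, rvEnt_conv p q ψ, rvEnt_conv p q fun x => (φ x, ψ x)]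

end Noise

section Quotients

variable {R : Type v} [Ring R] {G : Type*} [AddCommGroup G] [Module R G]

/-- The entropy `H[π_V(X)]` for `X ∼ p`. -/
def quotEnt (V : Submodule R G) (p : G → ℝ) : ℝ := ent (push V.mkQ p)

/-- The conditional entropy `H[X | π_V(X)]` for `X ∼ p`. -/
def fibreEnt (V : Submodule R G) (p : G → ℝ) : ℝ := ent p - quotEnt V p

/-- The entropy `log |V|` of the uniform distribution on `V`. -/
def logCard (V : Submodule R G) : ℝ := log (Nat.card V)

variable {V W : Submodule R G} {p q : G → ℝ}

lemma factorsThrough_mkQ (hVW : V ≤ W) : Function.FactorsThrough W.mkQ V.mkQ := fun x y h => by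
  have hxy : x - y ∈ V := (Submodule.Quotient.eq V).1 h
  exact (Submodule.Quotient.eq W).2 (hVW hxy)

lemma logCard_bot : logCard (⊥ : Submodule R G) = 0 := by
  simp only [logCard, Submodule.mem_bot, Nat.card_unique, Nat.cast_one, log_one]

lemma logCard_nonneg (V : Submodule R G) : 0 ≤ logCard V :=
  log_natCast_nonneg _

variable [Finite G]

instance finite_quotient_submodule (V : Submodule R G) : Finite (G ⧸ V) :=
  Finite.of_surjective V.mkQ V.mkQ_surjective

lemma quotEnt_le (hp : IsDist p) (V : Submodule R G) : quotEnt V p ≤ ent p :=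
  ent_push_le hp V.mkQ

lemma quotEnt_nonneg (hp : IsDist p) (V : Submodule R G) : 0 ≤ quotEnt V p :=
  ent_nonneg (hp.push V.mkQ)

lemma fibreEnt_nonneg (hp : IsDist p) (V : Submodule R G) : 0 ≤ fibreEnt V p :=
  sub_nonneg.2 (quotEnt_le hp V)

lemma quotEnt_bot (hp : IsDist p) : quotEnt (⊥ : Submodule R G) p = ent p :=
  ent_push_of_injective hp <| LinearMap.ker_eq_bot.1 (Submodule.ker_mkQ ⊥)

lemma quotEnt_push_mkQ (hp : IsDist p) (V : Submodule R G) (W : Submodule R (G ⧸ V)) :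
    quotEnt W (push V.mkQ p) = quotEnt (W.comap V.mkQ) p := by
  rw [quotEnt, push_push]
  refine rvEnt_congr hp (fun x y h => ?_) fun x y h => ?_
  · refine (Submodule.Quotient.eq W).2 ?_
    rw [← map_sub]
    exact (Submodule.Quotient.eq (W.comap V.mkQ)).1 h
  · refine (Submodule.Quotient.eq (W.comap V.mkQ)).2 ?_
    rw [Submodule.mem_comap, map_sub]
    exact (Submodule.Quotient.eq W).1 h

lemma logCard_comap_mkQ (V : Submodule R G) (W : Submodule R (G ⧸ V)) :
    logCard (W.comap V.mkQ) = logCard V + logCard W := by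
  have hmap : (W.comap V.mkQ).map V.mkQ = W :=
    Submodule.map_comap_eq_of_surjective V.mkQ_surjective W
  have hthird := Submodule.card_quotient_mul_card_quotient (W.comap V.mkQ) V
    (Submodule.le_comap_mkQ V W)
  have hV := Submodule.card_eq_card_quotient_mul_card V
  rw [← hthird, hmap, Submodule.card_eq_card_quotient_mul_card (W.comap V.mkQ), ← mul_assoc] at hV
  rw [logCard, Nat.eq_of_mul_eq_mul_right Nat.card_pos hV, Nat.cast_mul,
    log_mul (Nat.cast_ne_zero.2 Nat.card_pos.ne') (Nat.cast_ne_zero.2 Nat.card_pos.ne')]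
  rfl

lemma quotEnt_sub_quotEnt_le_conv (hp : IsDist p) (hq : IsDist q) (hVW : V ≤ W) :
    quotEnt V q - quotEnt W q ≤ quotEnt V (conv p q) - quotEnt W (conv p q) := by
  have hchain {r : G → ℝ} (hr : IsDist r) :
      rvCondEnt r V.mkQ W.mkQ = quotEnt V r - quotEnt W r :=
    congrArg (· - quotEnt W r) <| rvEnt_congr hr
      (fun x y h => Prod.ext h (factorsThrough_mkQ hVW h))
      fun x y h => congrArg Prod.fst h
  rw [← hchain hq, ← hchain (hp.conv hq)]
  exact rvCondEnt_le_rvCondEnt_conv hp hq V.mkQ.toAddMonoidHom W.mkQ.toAddMonoidHom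

end Quotients

section Rigidity

variable {R : Type v} [Ring R] {G : Type u} [AddCommGroup G] [Module R G]

variable (R) in
/-- The law `p` of `X` is `κ`-rigid: `H[X | π_V(X)] ≤ κ log |V|` for every submodule `V`. -/
def Rigid (κ : ℝ) (p : G → ℝ) : Prop := ∀ V : Submodule R G, fibreEnt V p ≤ κ * logCard V

/-- The inequality `s[X ; Y] ≤ η (H[X] + H[Y])` for all pairs that are jointly `κ`-rigid, in the
sense that `H[X | π_V(X)] + H[Y | π_V(Y)] ≤ κ log |V|` for every submodule `V`. -/
def RigidDoublingBound (R : Type v) [Ring R] (η κ : ℝ) : Prop :=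
  ∀ (G : Type u) [AddCommGroup G] [Module R G] [Finite G] (p q : G → ℝ), IsDist p → IsDist q →
    (∀ V : Submodule R G, fibreEnt V p + fibreEnt V q ≤ κ * logCard V) →
    sDouble p q ≤ η * (ent p + ent q)

variable [Finite G] {Ω τ τ' : Type*} [Finite Ω] [Finite τ] [Finite τ'] {μ : Ω → ℝ}

/-- `V` minimises `κ log |V| + ∑ i, H[π_V(X i)]` among the submodules containing `V₀`. -/
lemma exists_rigid_quotient {ι : Type*} [Fintype ι] {p : ι → G → ℝ} (hp : ∀ i, IsDist (p i))
    (κ : ℝ) (V₀ : Submodule R G) :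
    ∃ V : Submodule R G, V₀ ≤ V ∧
      κ * (logCard V - logCard V₀) ≤ ∑ i, (quotEnt V₀ (p i) - quotEnt V (p i)) ∧
      ∀ W : Submodule R (G ⧸ V), ∑ i, fibreEnt W (push V.mkQ (p i)) ≤ κ * logCard W := by
  obtain ⟨V, hV, hmin⟩ := Set.exists_min_image {V : Submodule R G | V₀ ≤ V}
    (fun V => κ * logCard V + ∑ i, quotEnt V (p i)) (Set.toFinite _) ⟨V₀, le_refl V₀⟩
  refine ⟨V, hV, ?_, fun W => ?_⟩
  · have h₀ := hmin V₀ (le_refl V₀)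
    rw [Finset.sum_sub_distrib]
    linarith
  · have hW := hmin (W.comap V.mkQ) (le_trans hV (Submodule.le_comap_mkQ V W))
    simp only [fibreEnt, quotEnt_push_mkQ (hp _), Finset.sum_sub_distrib]
    simp only [logCard_comap_mkQ] at hW
    change ∑ i, quotEnt V (p i) - _ ≤ _
    linarith

lemma rigid_of_sum_fibreEnt_le {ι : Type*} [Fintype ι] {p : ι → G → ℝ} (hp : ∀ i, IsDist (p i))
    {κ : ℝ} (h : ∀ V : Submodule R G, ∑ i, fibreEnt V (p i) ≤ κ * logCard V) (i : ι) :
    Rigid R κ (p i) := fun V =>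
  (Finset.single_le_sum (fun j _ => fibreEnt_nonneg (hp j) V) (Finset.mem_univ i)).trans (h V)

lemma RigidDoublingBound.exists_quotient {η κ : ℝ} (h : RigidDoublingBound.{u, v} R η κ)
    (V₀ : Submodule R G) {p q : G → ℝ} (hp : IsDist p) (hq : IsDist q) :
    ∃ V : Submodule R G, V₀ ≤ V ∧
      κ * (logCard V - logCard V₀) ≤
        (quotEnt V₀ p - quotEnt V p) + (quotEnt V₀ q - quotEnt V q) ∧
      sDouble (push V.mkQ p) (push V.mkQ q) ≤ η * (quotEnt V p + quotEnt V q) := by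
  obtain ⟨V, hV, hcard, hrigid⟩ := exists_rigid_quotient (p := ![p, q])
    (fun i => by fin_cases i <;> assumption) κ V₀
  simp only [Fin.sum_univ_two, Matrix.cons_val_zero, Matrix.cons_val_one] at hcard hrigid
  exact ⟨V, hV, hcard, h (G ⧸ V) _ _ (hp.push _) (hq.push _) hrigid⟩

lemma sDouble_le_quotEnt_sub_add {V W : Submodule R G} (hVW : V ≤ W) {p q : G → ℝ}
    (hp : IsDist p) (hq : IsDist q) :
    sDouble (push V.mkQ p) (push V.mkQ q) ≤
      (quotEnt V p - quotEnt W p) + sDouble (push W.mkQ p) (push W.mkQ q) := by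
  have h := quotEnt_sub_quotEnt_le_conv hp hq hVW
  simp only [sDouble, ← push_conv]
  simp only [quotEnt] at h ⊢
  linarith

lemma sDouble_comm (p q : G → ℝ) : sDouble p q = sDouble q p := by
  rw [sDouble, sDouble, conv_comm, add_comm (ent p)]

lemma sDouble_le_fibreEnt_add (V : Submodule R G) {p q : G → ℝ} (hp : IsDist p) (hq : IsDist q) :
    sDouble p q ≤ fibreEnt V p + sDouble (push V.mkQ p) (push V.mkQ q) := by
  have h := quotEnt_sub_quotEnt_le_conv hp hq (bot_le : ⊥ ≤ V)
  rw [quotEnt_bot hq, quotEnt_bot (hp.conv hq)] at h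
  simp only [sDouble, ← push_conv, fibreEnt]
  simp only [quotEnt] at h ⊢
  linarith

/-- `V` is chosen to minimise `H[π_V(Z)] + (δκ/2) log |V|`, where `Z ∼ g`. -/
lemma RigidDoublingBound.exists_submodule {η κ δ : ℝ} (h : RigidDoublingBound.{u, v} R η κ)
    (hη : 0 ≤ η) (hδ : 0 ≤ δ) {g : G → ℝ} (hg : IsDist g) :
    ∃ V : Submodule R G, δ * κ / 2 * logCard V ≤ ent g ∧ ∀ f : G → ℝ, IsDist f →
      sDouble f g ≤ fibreEnt V f + (η + δ / 2) * (ent f + ent g) := by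
  obtain ⟨V, hV⟩ := Finite.exists_min fun V : Submodule R G => quotEnt V g + δ * κ / 2 * logCard V
  refine ⟨V, ?_, fun f hf => ?_⟩
  · have hbot := hV ⊥
    rw [quotEnt_bot hg, logCard_bot] at hbot
    linarith [quotEnt_nonneg hg V]
  · obtain ⟨W, hVW, hcard, hs⟩ := h.exists_quotient V hf hg
    have hfib := sDouble_le_fibreEnt_add V hf hg
    have hquot := sDouble_le_quotEnt_sub_add hVW hg hf
    rw [sDouble_comm, sDouble_comm (push W.mkQ g)] at hquot
    have hmin := hV W
    have hfW := quotEnt_le hf W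
    have hgW := quotEnt_le hg W
    have hcard' : κ * (logCard W - logCard V) ≤ ent f + ent g := by
      linarith [quotEnt_le hf V, quotEnt_le hg V, quotEnt_nonneg hf W, quotEnt_nonneg hg W]
    have hδcard := mul_le_mul_of_nonneg_left hcard' (by positivity : 0 ≤ δ / 2)
    have hηW : η * (quotEnt W f + quotEnt W g) ≤ η * (ent f + ent g) := by gcongr
    linarith

lemma mean_ent_sub_condLaw_le {α β : Type*} [Finite α] [Finite β] (hμ : IsDist μ) (X : Ω → α)
    (T : Ω → τ) (φ : α → β) :
    (mean (push T μ) fun t => ent (condLaw μ X T t) - ent (push φ (condLaw μ X T t))) ≤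
      ent (push X μ) - ent (push φ (push X μ)) := by
  have hcond := rvCondEnt_le_of_factorsThrough hμ X (S := fun ω => (φ (X ω), T ω))
    (T := fun ω => φ (X ω)) fun ω ω' h => congrArg Prod.fst h
  have hXT : rvEnt μ (fun ω => (X ω, φ (X ω), T ω)) = rvEnt μ fun ω => (X ω, T ω) :=
    rvEnt_congr hμ (fun ω ω' h => by simp_all) fun ω ω' h => by simp_all
  have hX : rvEnt μ (fun ω => (X ω, φ (X ω))) = rvEnt μ X :=
    rvEnt_congr hμ (fun ω ω' h => by simp_all) fun ω ω' h => by simp_all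
  simp only [mean_sub, push_condLaw, mean_ent_condLaw hμ, push_push]
  simp only [rvCondEnt, hXT, hX] at hcond ⊢
  simp only [rvEnt] at hcond ⊢
  linarith

lemma Rigid.mean_fibreEnt_condLaw_le {κ : ℝ} {X : Ω → G} (h : Rigid R κ (push X μ))
    (hμ : IsDist μ) (T : Ω → τ) {Q : τ' → ℝ} (hQ : IsDist Q) (V : τ' → Submodule R G) :
    (mean (push T μ) fun t => mean Q fun w => fibreEnt (V w) (condLaw μ X T t)) ≤
      κ * mean Q fun w => logCard (V w) := by
  rw [mean_comm, ← mean_const_mul]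
  exact mean_mono hQ.1 fun w => (mean_ent_sub_condLaw_le hμ X T (V w).mkQ).trans (h (V w))

lemma RigidDoublingBound.mean_sDouble_condLaw_le {η κ δ : ℝ} (h : RigidDoublingBound.{u, v} R η κ)
    (hη : 0 ≤ η) (hδ : 0 ≤ δ) (hμ : IsDist μ) {X : Ω → G} (T : Ω → τ)
    (hX : Rigid R (δ ^ 2 * κ / 4) (push X μ)) {Q : τ' → ℝ} (hQ : IsDist Q) {g : τ' → G → ℝ}
    (hg : ∀ w, IsDist (g w)) :
    (mean (push T μ) fun t => mean Q fun w => sDouble (condLaw μ X T t) (g w)) ≤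
      (η + δ) * (rvCondEnt μ X T + mean Q fun w => ent (g w)) := by
  choose V hVcard hV using fun w => h.exists_submodule hη hδ (hg w)
  have hT := hμ.push T
  have hrigid := hX.mean_fibreEnt_condLaw_le hμ T hQ V
  have hcard : δ / 2 * mean Q (fun w => δ * κ / 2 * logCard (V w)) ≤
      δ / 2 * mean Q fun w => ent (g w) := by
    gcongr
    exact mean_mono hQ.1 hVcard
  rw [mean_const_mul] at hcard
  have hnonneg := mul_nonneg hδ (rvCondEnt_nonneg hμ X T)
  calc (mean (push T μ) fun t => mean Q fun w => sDouble (condLaw μ X T t) (g w))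
    _ ≤ mean (push T μ) fun t => mean Q fun w => fibreEnt (V w) (condLaw μ X T t) +
          (η + δ / 2) * (ent (condLaw μ X T t) + ent (g w)) :=
        mean_mono hT.1 fun t => mean_mono hQ.1 fun w => hV w _ (hμ.condLaw X T t)
    _ = (mean (push T μ) fun t => mean Q fun w => fibreEnt (V w) (condLaw μ X T t)) +
          (η + δ / 2) * (rvCondEnt μ X T + mean Q fun w => ent (g w)) := by
        simp only [mean_add, mean_const_mul, hQ.mean_const, hT.mean_const, mean_ent_condLaw hμ]
    _ ≤ _ := by linarith

end Rigidity

section Endgame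

/-- The law of four independent copies `((Z₁, Z₂), (Z₃, Z₄))` of `Z ∼ z`. -/
def fourCopies {α : Type*} (z : α → ℝ) : (α × α) × α × α → ℝ :=
  prodDist (prodDist z z) (prodDist z z)

lemma IsDist.fourCopies {α : Type*} [Finite α] {z : α → ℝ} (hz : IsDist z) :
    IsDist (fourCopies z) :=
  (hz.prodDist hz).prodDist (hz.prodDist hz)

variable {G : Type*} [AddCommGroup G]

/-- The sum `Z₁ + Z₂`. -/
def sum₁₂ (ω : (G × G) × G × G) : G := ω.1.1 + ω.1.2

/-- The sum `Z₂ + Z₃`. -/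
def sum₂₃ (ω : (G × G) × G × G) : G := ω.1.2 + ω.2.1

/-- The sum `Z₁ + Z₂ + Z₃ + Z₄`. -/
def sum₁₂₃₄ (ω : (G × G) × G × G) : G := ω.1.1 + ω.1.2 + (ω.2.1 + ω.2.2)

lemma sum₁₂_add_sum₂₃ [Module (ZMod 2) G] (ω : (G × G) × G × G) :
    sum₁₂ ω + sum₂₃ ω = ω.1.1 + ω.2.1 := by
  rw [sum₁₂, sum₂₃, add_assoc, ← add_assoc ω.1.2, ZModModule.add_self, zero_add]

/-- The conditional mutual information `I[Z₁ + Z₂ : Z₂ + Z₃ | Z₁ + Z₂ + Z₃ + Z₄]`. -/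
def endgameInfo (z : G → ℝ) : ℝ :=
  condMI (push (fun ω => (sum₁₂ ω, sum₂₃ ω, sum₁₂₃₄ ω)) (fourCopies z))

/-- The law of `Z₁ + Z₂` conditioned on `(Z₂ + Z₃, Z₁ + Z₂ + Z₃ + Z₄) = t`. -/
def endgameLaw (z : G → ℝ) (t : G × G) : G → ℝ :=
  condLaw (fourCopies z) sum₁₂ (fun ω => (sum₂₃ ω, sum₁₂₃₄ ω)) t

/-- The law of `(Z₂ + Z₃, Z₁ + Z₂ + Z₃ + Z₄)`. -/
def endgameIndex (z : G → ℝ) : G × G → ℝ :=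
  push (fun ω => (sum₂₃ ω, sum₁₂₃₄ ω)) (fourCopies z)

variable [Finite G] {z : G → ℝ}

lemma IsDist.endgameIndex (hz : IsDist z) : IsDist (endgameIndex z) := hz.fourCopies.push _

lemma IsDist.endgameLaw (hz : IsDist z) (t : G × G) : IsDist (endgameLaw z t) :=
  hz.fourCopies.condLaw _ _ t

lemma push_sum₁₂ (hz : IsDist z) : push sum₁₂ (fourCopies z) = conv z z :=
  (push_comp_fst (fun x : G × G => x.1 + x.2) _ (hz.prodDist hz)).trans (conv_eq_push z z).symm

lemma push_sum₁₂₃₄ (z : G → ℝ) : push sum₁₂₃₄ (fourCopies z) = conv (conv z z) (conv z z) := by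
  rw [conv_eq_push z z]
  exact push_add (fun x : G × G => x.1 + x.2) (fun x : G × G => x.1 + x.2) _ _

lemma rvEnt_sum₁₂_sum₃₄ (hz : IsDist z) :
    rvEnt (fourCopies z) (fun ω => (ω.1.1 + ω.1.2, ω.2.1 + ω.2.2)) = 2 * ent (conv z z) := by
  have h := push_prodMap (fun x : G × G => x.1 + x.2) (fun x : G × G => x.1 + x.2)
    (prodDist z z) (prodDist z z)
  rw [← conv_eq_push] at h
  rw [two_mul, ← ent_prodDist (hz.conv hz) (hz.conv hz)]
  exact congrArg ent h

lemma rvEnt_sum₁₂_sum₁₂₃₄ (hz : IsDist z) :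
    rvEnt (fourCopies z) (fun ω => (sum₁₂ ω, sum₁₂₃₄ ω)) = 2 * ent (conv z z) := by
  rw [← rvEnt_sum₁₂_sum₃₄ hz]
  refine rvEnt_congr hz.fourCopies (fun ω ω' h => ?_) fun ω ω' h => ?_
  · simp only [Prod.mk.injEq] at h
    simp only [sum₁₂, sum₁₂₃₄, h]
  · simp only [sum₁₂, sum₁₂₃₄, Prod.mk.injEq] at h ⊢
    exact ⟨h.1, add_left_cancel ((congrArg (· + _) h.1).symm.trans h.2)⟩

lemma rvEnt_sum₂₃_sum₁₂₃₄ (hz : IsDist z) :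
    rvEnt (fourCopies z) (fun ω => (sum₂₃ ω, sum₁₂₃₄ ω)) = 2 * ent (conv z z) := by
  rw [← rvEnt_sum₁₂_sum₁₂₃₄ hz]
  refine congrArg ent (eq_of_mean_eq fun F => ?_)
  simp only [mean_push, fourCopies, mean_prodDist, sum₁₂, sum₂₃, sum₁₂₃₄]
  rw [mean_comm]
  refine congrArg (mean z) (funext fun b => ?_)
  rw [mean_comm]
  simp only [add_comm, add_left_comm]

lemma endgameInfo_eq (hz : IsDist z) :
    endgameInfo z = 4 * ent (conv z z) -
      rvEnt (fourCopies z) (fun ω => (sum₁₂ ω, sum₂₃ ω, sum₁₂₃₄ ω)) -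
        ent (conv (conv z z) (conv z z)) := by
  have h₁₂ := rvEnt_sum₁₂_sum₁₂₃₄ hz
  have h₂₃ := rvEnt_sum₂₃_sum₁₂₃₄ hz
  simp only [rvEnt] at h₁₂ h₂₃ ⊢
  simp only [endgameInfo, condMI, push_push, h₁₂, h₂₃, push_sum₁₂₃₄]
  ring

lemma mean_ent_endgameLaw (hz : IsDist z) :
    (mean (endgameIndex z) fun t => ent (endgameLaw z t)) =
      sDouble (conv z z) (conv z z) - endgameInfo z := by
  refine (mean_ent_condLaw hz.fourCopies _ _).trans ?_
  rw [rvCondEnt, rvEnt_sum₂₃_sum₁₂₃₄ hz, endgameInfo_eq hz, sDouble]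
  ring

lemma mean_ent_conv_endgameLaw_le (hz : IsDist z) :
    (mean (endgameIndex z) fun t => mean (endgameIndex z) fun t' =>
        ent (conv (endgameLaw z t) (endgameLaw z t'))) ≤
      sDouble (conv (conv z z) (conv z z)) (conv (conv z z) (conv z z)) := by
  have h := mean_ent_conv_condLaw_le_fibring hz.fourCopies hz.fourCopies
    (X := sum₁₂) (X' := fun ω => ω.2.1 + ω.2.2) (T := fun ω => (sum₂₃ ω, sum₁₂₃₄ ω))
    (Y := sum₁₂) (Y' := fun ω => ω.2.1 + ω.2.2) (T' := fun ω => (sum₂₃ ω, sum₁₂₃₄ ω))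
    (fun ω ω' h => congrArg Prod.snd h) (fun ω ω' h => congrArg Prod.snd h)
  have h₃₄ : push (fun ω : (G × G) × G × G => ω.2.1 + ω.2.2) (fourCopies z) = conv z z :=
    (push_comp_snd (hz.prodDist hz) (fun x : G × G => x.1 + x.2) _).trans (conv_eq_push z z).symm
  have hsum : push (sum₁₂ + fun ω : (G × G) × G × G => ω.2.1 + ω.2.2) (fourCopies z) =
      conv (conv z z) (conv z z) := push_sum₁₂₃₄ z
  rw [push_sum₁₂ hz, h₃₄, hsum] at h
  exact h

variable [Module (ZMod 2) G]

lemma rvEnt_sum₁₂_add_sum₂₃_sum₁₂₃₄ (hz : IsDist z) :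
    rvEnt (fourCopies z) (fun ω => (sum₁₂ ω + sum₂₃ ω, sum₁₂₃₄ ω)) = 2 * ent (conv z z) := by
  rw [← rvEnt_sum₁₂_sum₁₂₃₄ hz]
  simp only [sum₁₂_add_sum₂₃]
  refine congrArg ent (eq_of_mean_eq fun F => ?_)
  simp only [sum₁₂, sum₁₂₃₄, mean_push, fourCopies, mean_prodDist]
  refine congrArg (mean z) (funext fun a => ?_)
  rw [mean_comm]
  simp only [add_comm, add_left_comm]

lemma mean_ent_conv_sub_ent_endgameLaw_le (hz : IsDist z) :
    (mean (endgameIndex z) fun t =>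
        ent (conv (endgameLaw z t) (endgameLaw z t)) - ent (endgameLaw z t)) ≤
      3 * endgameInfo z := by
  have h := mean_ent_conv_self_condLaw_le hz.fourCopies sum₁₂ sum₂₃ sum₁₂₃₄
  have hent := mean_ent_endgameLaw hz
  have hS : rvEnt (fourCopies z) sum₁₂₃₄ = ent (conv (conv z z) (conv z z)) := by
    rw [rvEnt, push_sum₁₂₃₄]
  rw [mean_sub, hent]
  simp only [rvCondEnt, rvEnt_sum₁₂_sum₁₂₃₄ hz, rvEnt_sum₂₃_sum₁₂₃₄ hz,
    rvEnt_sum₁₂_add_sum₂₃_sum₁₂₃₄ hz, hS] at h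
  have hinfo := endgameInfo_eq hz
  rw [sDouble]
  simp only [endgameIndex, endgameLaw]
  linarith

lemma mean_ent_conv_sumCond (hz : IsDist z) :
    (mean (conv z z) fun s => mean (conv z z) fun s' =>
        ent (conv (sumCond z z s) (sumCond z z s'))) =
      sDouble (conv z z) (conv z z) - endgameInfo z := by
  have hzz := hz.prodDist hz
  have h := mean_ent_conv_condLaw hzz hzz Prod.fst (fun x => x.1 + x.2) Prod.fst
    fun x => x.1 + x.2
  have hsum : rvEnt (fourCopies z)
      (fun ω => (ω.1.1 + ω.2.1, ω.1.1 + ω.1.2, ω.2.1 + ω.2.2)) =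
        rvEnt (fourCopies z) fun ω => (sum₁₂ ω, sum₂₃ ω, sum₁₂₃₄ ω) := by
    simp only [← sum₁₂_add_sum₂₃, sum₁₂₃₄]
    refine rvEnt_congr hz.fourCopies (fun ω ω' h => ?_) fun ω ω' h => ?_
    · simp only [Prod.mk.injEq, sum₁₂] at h ⊢
      exact ⟨by rw [h.1, h.2.1], h.1, add_left_cancel ((congrArg (· + _) h.1).symm.trans h.2.2)⟩
    · simp only [Prod.mk.injEq, sum₁₂] at h ⊢
      exact ⟨h.2.1, add_left_cancel ((congrArg (· + _) h.2.1).symm.trans h.1), by rw [h.2.1, h.2.2]⟩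
  rw [← conv_eq_push] at h
  refine h.trans ?_
  rw [rvCondEnt]
  refine (congrArg₂ (· - ·) hsum (rvEnt_sum₁₂_sum₃₄ hz)).trans ?_
  rw [endgameInfo_eq hz, sDouble]
  ring

end Endgame

section EqualityCase

variable {G : Type*} [AddCommGroup G] [Finite G] {p q : G → ℝ}

/-- The equality case of Jensen's inequality for the concave function `x ↦ -x log x`. -/
lemma apply_sub_eq_of_ent_conv_le (hp : IsDist p) (hq : IsDist q) (h : ent (conv p q) ≤ ent p)
    {b b' : G} (hb : q b ≠ 0) (hb' : q b' ≠ 0) (c : G) : p (c - b) = p (c - b') := by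
  cases nonempty_fintype G
  have hsum : ∑ b, q b = 1 := (finsum_eq_sum_of_fintype _).symm.trans hq.2
  have hconv (c : G) : conv p q c = ∑ b, q b • p (c - b) := by
    rw [conv_comm]
    exact finsum_eq_sum_of_fintype _
  have hent (f : G → ℝ) : ent f = ∑ c, negMulLog (f c) := finsum_eq_sum_of_fintype _
  have hJensen (c : G) : ∑ b, q b • negMulLog (p (c - b)) ≤ negMulLog (conv p q c) := by
    rw [hconv]
    exact concaveOn_negMulLog.le_map_sum (fun b _ => hq.1 b) hsum fun b _ => hp.1 _
  have havg : ∑ c, ∑ b, q b • negMulLog (p (c - b)) = ent p := by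
    rw [Finset.sum_comm]
    simp only [smul_eq_mul, ← Finset.mul_sum, hent p]
    simp only [Fintype.sum_equiv (Equiv.subRight _) (fun c => negMulLog (p (c - _)))
      (fun c => negMulLog (p c)) fun _ => rfl]
    rw [← Finset.sum_mul, hsum, one_mul]
  have heq := (Finset.sum_eq_sum_iff_of_le fun c _ => hJensen c).1
    (le_antisymm (Finset.sum_le_sum fun c _ => hJensen c) (by rwa [havg, ← hent]))
  have hconst := (strictConcaveOn_negMulLog.map_sum_eq_iff' (fun b _ => hq.1 b) hsum
    fun b _ => hp.1 _).1 (by rw [← hconv, heq c (Finset.mem_univ c)])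
  exact (hconst b (Finset.mem_univ b) hb).trans (hconst b' (Finset.mem_univ b') hb').symm

variable {n : ℕ} [Module (ZMod n) G]

variable (n) in
/-- The subspace of all periods of the function `p`. -/
def periods (p : G → ℝ) : Submodule (ZMod n) G :=
  AddSubgroup.toZModSubmodule n
    { carrier := {v | Function.Periodic p v}
      zero_mem' := fun a => by rw [add_zero]
      add_mem' := fun hv hw => hv.add_period hw
      neg_mem' := fun hv => hv.neg }

lemma card_periods_mul_apply_le_one (hp : IsDist p) (a : G) :
    Nat.card (periods n p) * p a ≤ 1 := by
  cases nonempty_fintype G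
  have hinj : (fun v : periods n p => a + v).Injective :=
    (add_right_injective a).comp Subtype.val_injective
  calc Nat.card (periods n p) * p a = ∑ᶠ v : periods n p, p (a + v) := by
        have : Fintype (periods n p) := Fintype.ofFinite _
        rw [finsum_congr fun v : periods n p => (v.2 : Function.Periodic p v) a,
          finsum_eq_sum_of_fintype, Finset.sum_const, Finset.card_univ, nsmul_eq_mul,
          Nat.card_eq_fintype_card]
    _ = ∑ᶠ b ∈ Set.range fun v : periods n p => a + v, p b := (finsum_mem_range hinj).symm
    _ ≤ ∑ᶠ b, p b := by
        rw [finsum_mem_def, finsum_eq_sum_of_fintype, finsum_eq_sum_of_fintype]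
        exact Finset.sum_le_sum fun b _ => Set.indicator_le_self' (fun _ _ => hp.1 _) b
    _ = 1 := hp.2

lemma logCard_periods_le (hp : IsDist p) : logCard (periods n p) ≤ ent p := by
  rw [ent_eq_mean, ← hp.mean_const (logCard (periods n p))]
  refine mean_mono_of_support hp.1 fun a ha => ?_
  have hcard : (0 : ℝ) < Nat.card (periods n p) := Nat.cast_pos.2 Nat.card_pos
  have hlog := log_nonpos (mul_nonneg hcard.le (hp.1 a))
    (card_periods_mul_apply_le_one (n := n) hp a)
  rw [log_mul hcard.ne' ha] at hlog
  rw [logCard]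
  linarith

lemma quotEnt_periods_eq_zero (hp : IsDist p) (hq : IsDist q) (h : ent (conv p q) ≤ ent p) :
    quotEnt (periods n p) q = 0 := by
  classical
  have hmk {b b' : G} (hb : q b ≠ 0) (hb' : q b' ≠ 0) :
      (periods n p).mkQ b' = (periods n p).mkQ b := by
    refine (Submodule.Quotient.eq _).2 fun a => ?_
    rw [← add_sub_assoc, apply_sub_eq_of_ent_conv_le hp hq h hb hb', add_sub_cancel_right]
  have hone {b : G} (hb : q b ≠ 0) :
      push (periods n p).mkQ q ((periods n p).mkQ b) = 1 := by
    rw [push_eq_mean]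
    exact (mean_congr_of_support fun b' hb' => if_pos (hmk hb hb')).trans (hq.mean_const 1)
  rw [quotEnt, ← rvEnt, rvEnt_eq_mean, ← hq.mean_const 0]
  exact mean_congr_of_support fun b hb => by rw [hone hb, log_one, neg_zero]

end EqualityCase

section WeakInverseTheorem

variable {G : Type*} [AddCommGroup G]

/-- The functional `τ[X ; Y] = d[X ; Y] + (d[Z ; X] + d[Z ; Y]) / 32` relative to a reference
variable `Z ∼ r`, for `X ∼ p` and `Y ∼ q`. Its minimisers turn out to satisfy `d[X ; Y] = 0`. -/
def ruzsaTau (r p q : G → ℝ) : ℝ := dRuzsa p q + (dRuzsa r p + dRuzsa r q) / 32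

/-- The pair `p`, `q` minimises `ruzsaTau r` among all pairs of laws on `G`. -/
structure IsTauMinimizer (r p q : G → ℝ) : Prop where
  left : IsDist p
  right : IsDist q
  le : ∀ {f g : G → ℝ}, IsDist f → IsDist g → ruzsaTau r p q ≤ ruzsaTau r f g

lemma IsTauMinimizer.le_mean {r p q : G → ℝ} (h : IsTauMinimizer r p q) {τ τ' : Type*}
    [Finite τ] [Finite τ'] {P : τ → ℝ} {Q : τ' → ℝ} (hP : IsDist P) (hQ : IsDist Q) {f : τ → G → ℝ}
    {g : τ' → G → ℝ} (hf : ∀ t, IsDist (f t)) (hg : ∀ t, IsDist (g t)) :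
    ruzsaTau r p q ≤ (mean P fun t => mean Q fun t' => dRuzsa (f t) (g t')) +
      ((mean P fun t => dRuzsa r (f t)) + mean Q fun t => dRuzsa r (g t)) / 32 := by
  calc ruzsaTau r p q = mean P fun _ => mean Q fun _ => ruzsaTau r p q := by
        simp only [hP.mean_const, hQ.mean_const]
    _ ≤ mean P fun t => mean Q fun t' => ruzsaTau r (f t) (g t') :=
        mean_mono hP.1 fun t => mean_mono hQ.1 fun t' => h.le (hf t) (hg t')
    _ = _ := by
        simp only [ruzsaTau, mean_add, div_eq_inv_mul, mean_const_mul, hQ.mean_const, hP.mean_const]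

lemma mean_mean_dRuzsa {τ τ' : Type*} [Finite τ] [Finite τ'] {P : τ → ℝ} {Q : τ' → ℝ}
    (hP : IsDist P) (hQ : IsDist Q) (f : τ → G → ℝ) (g : τ' → G → ℝ) :
    (mean P fun t => mean Q fun t' => dRuzsa (f t) (g t')) =
      (mean P fun t => mean Q fun t' => ent (conv (f t) (g t'))) -
        (mean P fun t => ent (f t)) / 2 - (mean Q fun t => ent (g t)) / 2 := by
  simp only [dRuzsa, mean_sub, div_eq_inv_mul, mean_const_mul, hQ.mean_const, hP.mean_const]

lemma continuous_ent {α : Type*} [Finite α] : Continuous fun p : α → ℝ => ent p := by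
  cases nonempty_fintype α
  simp only [ent, finsum_eq_sum_of_fintype]
  exact continuous_finsetSum _ fun a _ => continuous_negMulLog.comp (continuous_apply a)

variable [Finite G]

lemma continuous_conv : Continuous fun z : (G → ℝ) × (G → ℝ) => conv z.1 z.2 := by
  cases nonempty_fintype G
  refine continuous_pi fun c => ?_
  simp only [conv, finsum_eq_sum_of_fintype]
  fun_prop

lemma continuous_dRuzsa : Continuous fun z : (G → ℝ) × (G → ℝ) => dRuzsa z.1 z.2 :=
  ((continuous_ent.comp continuous_conv).sub
    ((continuous_ent.comp continuous_fst).div_const 2)).sub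
      ((continuous_ent.comp continuous_snd).div_const 2)

lemma exists_isTauMinimizer {r : G → ℝ} (hr : IsDist r) : ∃ p q, IsTauMinimizer r p q := by
  cases nonempty_fintype G
  have hmem (f : G → ℝ) : f ∈ stdSimplex ℝ G ↔ IsDist f := by
    rw [IsDist, finsum_eq_sum_of_fintype]
    rfl
  have hcont : Continuous fun z : (G → ℝ) × (G → ℝ) => ruzsaTau r z.1 z.2 :=
    continuous_dRuzsa.add (((continuous_dRuzsa.comp (continuous_const.prodMk continuous_fst)).add
      (continuous_dRuzsa.comp (continuous_const.prodMk continuous_snd))).div_const 32)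
  have hcompact := (isCompact_stdSimplex ℝ G).prod (isCompact_stdSimplex ℝ G)
  obtain ⟨z, hz, hmin⟩ := hcompact.exists_isMinOn ⟨(r, r), (hmem r).2 hr, (hmem r).2 hr⟩
    hcont.continuousOn
  exact ⟨z.1, z.2, (hmem _).1 hz.1, (hmem _).1 hz.2, fun hf hg =>
    hmin (Set.mk_mem_prod ((hmem _).2 hf) ((hmem _).2 hg))⟩

lemma dRuzsa_comm (p q : G → ℝ) : dRuzsa p q = dRuzsa q p := by
  rw [dRuzsa, dRuzsa, conv_comm]
  ring

lemma dRuzsa_nonneg {p q : G → ℝ} (hp : IsDist p) (hq : IsDist q) : 0 ≤ dRuzsa p q := by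
  have := ent_le_ent_conv_left hp hq
  have := ent_le_ent_conv_right hp hq
  rw [dRuzsa]
  linarith

lemma dRuzsa_triangle {p q r : G → ℝ} (hp : IsDist p) (hq : IsDist q) (hr : IsDist r) :
    dRuzsa p r ≤ dRuzsa p q + dRuzsa q r := by
  have := ruzsa_triangle hp hq hr
  simp only [dRuzsa]
  linarith

lemma dRuzsa_conv_right_le {r p q : G → ℝ} (hr : IsDist r) (hp : IsDist p) (hq : IsDist q) :
    dRuzsa r (conv p q) ≤ (dRuzsa r p + dRuzsa r q + dRuzsa p q) / 2 := by
  have hpq := kaimanovich_vershik hr hp hq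
  have hqp := kaimanovich_vershik hr hq hp
  rw [conv_comm q p] at hqp
  simp only [dRuzsa]
  linarith

lemma mean_ent_conv_sumCond_le {p q : G → ℝ} (hp : IsDist p) (hq : IsDist q) :
    (mean (conv p q) fun s => mean (conv q p) fun s' =>
        ent (conv (sumCond p q s) (sumCond q p s'))) ≤
      2 * ent (conv p q) - ent (conv (conv p q) (conv p q)) := by
  have h := mean_ent_conv_condLaw_le_fibring (hp.prodDist hq) (hq.prodDist hp) (X := Prod.fst)
    (X' := Prod.snd) (T := fun x => x.1 + x.2) (Y := Prod.fst) (Y' := Prod.snd)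
    (T' := fun x => x.1 + x.2) (fun _ _ h => h) fun _ _ h => h
  have hsum (f g : G → ℝ) : push (Prod.fst + Prod.snd) (prodDist f g) = conv f g :=
    (conv_eq_push f g).symm
  have hfst {f g : G → ℝ} (hg : IsDist g) : push Prod.fst (prodDist f g) = f :=
    (push_comp_fst (fun x => x) f hg).trans (push_id f)
  have hsnd {f g : G → ℝ} (hf : IsDist f) : push Prod.snd (prodDist f g) = g :=
    (push_comp_snd hf (fun x => x) g).trans (push_id g)
  rw [← conv_eq_push, ← conv_eq_push, hfst hq, hfst hp, hsnd hp, hsnd hq, hsum, hsum,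
    conv_comm q p] at h
  rw [conv_comm q p, two_mul]
  exact h

lemma mean_dRuzsa_condLaw_le {Ω τ : Type*} [Finite Ω] [Finite τ] {μ : Ω → ℝ} {r : G → ℝ}
    (hr : IsDist r) (hμ : IsDist μ) (X : Ω → G) (T : Ω → τ) :
    (mean (push T μ) fun t => dRuzsa r (condLaw μ X T t)) ≤
      ent (conv r (push X μ)) - ent r / 2 - rvCondEnt μ X T / 2 := by
  have h := mean_ent_conv_condLaw_right_le hr hμ X T
  simp only [dRuzsa, div_eq_inv_mul, mean_sub, mean_const_mul, (hμ.push T).mean_const,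
    mean_ent_condLaw hμ]
  linarith

lemma mean_dRuzsa_sumCond_le {r p q : G → ℝ} (hr : IsDist r) (hp : IsDist p) (hq : IsDist q) :
    (mean (conv p q) fun s => dRuzsa r (sumCond p q s)) ≤
      dRuzsa r p + (ent p - sDouble p q) / 2 := by
  have h := mean_dRuzsa_condLaw_le hr (hp.prodDist hq) Prod.fst fun x => x.1 + x.2
  rw [← conv_eq_push, (push_comp_fst (fun x => x) p hq).trans (push_id p),
    ← mean_ent_condLaw (hp.prodDist hq), ← conv_eq_push] at h
  have hs := mean_ent_sumCond hp hq
  simp only [sumCond] at hs ⊢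
  rw [hs] at h
  rw [dRuzsa]
  linarith

lemma mean_dRuzsa_endgameLaw_le {r z : G → ℝ} (hr : IsDist r) (hz : IsDist z) :
    (mean (endgameIndex z) fun t => dRuzsa r (endgameLaw z t)) ≤
      dRuzsa r (conv z z) + (dRuzsa (conv z z) (conv z z) + endgameInfo z) / 2 := by
  have hcond := mean_dRuzsa_condLaw_le hr hz.fourCopies sum₁₂ fun ω => (sum₂₃ ω, sum₁₂₃₄ ω)
  rw [← mean_ent_condLaw hz.fourCopies, push_sum₁₂ hz] at hcond
  have hent := mean_ent_endgameLaw hz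
  simp only [endgameIndex, endgameLaw] at hent ⊢
  rw [hent] at hcond
  simp only [dRuzsa, sDouble] at *
  linarith

section Minimizer

variable {r p q : G → ℝ} (h : IsTauMinimizer r p q)
include h

/-- Minimality is tested on `X` and `Y` conditioned on independent copies of `X + Y`. -/
lemma IsTauMinimizer.dRuzsa_conv_self_le (hr : IsDist r) :
    dRuzsa (conv p q) (conv p q) ≤ 33 / 32 * dRuzsa p q := by
  have hp := h.left
  have hq := h.right
  have havg := h.le_mean (hp.conv hq) (hq.conv hp) (hp.sumCond hq) (hq.sumCond hp)
  rw [mean_mean_dRuzsa (hp.conv hq) (hq.conv hp), mean_ent_sumCond hp hq,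
    mean_ent_sumCond hq hp] at havg
  have hfib := mean_ent_conv_sumCond_le hp hq
  have hrp := mean_dRuzsa_sumCond_le hr hp hq
  have hrq := mean_dRuzsa_sumCond_le hr hq hp
  simp only [ruzsaTau, dRuzsa, sDouble, conv_comm q p] at *
  linarith

variable [Module (ZMod 2) G]

/-- Minimality is tested on `Z = X + Y` conditioned on the sum of two copies of `Z`. -/
lemma IsTauMinimizer.dRuzsa_add_endgameInfo_le (hr : IsDist r) :
    dRuzsa (conv (conv p q) (conv p q)) (conv (conv p q) (conv p q)) + endgameInfo (conv p q) ≤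
      65 / 32 * dRuzsa (conv p q) (conv p q) - 31 / 32 * dRuzsa p q := by
  have hz := h.left.conv h.right
  have hrz := dRuzsa_conv_right_le hr h.left h.right
  generalize conv p q = z at *
  have havg := h.le_mean (hz.conv hz) (hz.conv hz) (hz.sumCond hz) (hz.sumCond hz)
  rw [mean_mean_dRuzsa (hz.conv hz) (hz.conv hz), mean_ent_sumCond hz hz,
    mean_ent_conv_sumCond hz] at havg
  have hcond := mean_dRuzsa_sumCond_le hr hz hz
  rw [ruzsaTau] at havg
  simp only [dRuzsa, sDouble] at *
  linarith

lemma IsTauMinimizer.endgameInfo_le (hr : IsDist r) :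
    endgameInfo (conv p q) ≤ 97 / 512 * dRuzsa p q := by
  have hz := h.left.conv h.right
  have hu := h.le (hz.conv hz) (hz.conv hz)
  rw [ruzsaTau, ruzsaTau] at hu
  have hru := dRuzsa_conv_right_le hr hz hz
  have hrz := dRuzsa_conv_right_le hr h.left h.right
  have hfirst := h.dRuzsa_conv_self_le hr
  have hsecond := h.dRuzsa_add_endgameInfo_le hr
  linarith

/-- Minimality is tested on `Z₁ + Z₂` conditioned on `(Z₂ + Z₃, Z₁ + Z₂ + Z₃ + Z₄)`, where the `Zᵢ`
are independent copies of `X + Y`. -/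
lemma IsTauMinimizer.dRuzsa_eq_zero (hr : IsDist r) : dRuzsa p q = 0 := by
  refine le_antisymm ?_ (dRuzsa_nonneg h.left h.right)
  have hz := h.left.conv h.right
  have hrz := dRuzsa_conv_right_le hr h.left h.right
  have hru := dRuzsa_conv_right_le hr hz hz
  have hfirst := h.dRuzsa_conv_self_le hr
  have hsecond := h.dRuzsa_add_endgameInfo_le hr
  have hinfo := h.endgameInfo_le hr
  generalize conv p q = z at *
  have hdiag : ruzsaTau r p q ≤ (mean (endgameIndex z) fun t =>
      ruzsaTau r (endgameLaw z t) (endgameLaw z t)) := by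
    rw [← hz.endgameIndex.mean_const (ruzsaTau r p q)]
    exact mean_mono hz.endgameIndex.1 fun t => h.le (hz.endgameLaw t) (hz.endgameLaw t)
  have hmean := mean_dRuzsa_endgameLaw_le hr hz
  have hself (t : G × G) : ruzsaTau r (endgameLaw z t) (endgameLaw z t) =
      (ent (conv (endgameLaw z t) (endgameLaw z t)) - ent (endgameLaw z t)) +
        1 / 16 * dRuzsa r (endgameLaw z t) := by
    rw [ruzsaTau, dRuzsa]
    ring
  simp only [hself, mean_add, mean_const_mul] at hdiag
  have hend := mean_ent_conv_sub_ent_endgameLaw_le hz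
  rw [ruzsaTau] at hdiag
  linarith

end Minimizer

lemma Rigid.ent_le_dRuzsa [Module (ZMod 2) G] {p q : G → ℝ} (h : Rigid (ZMod 2) (1 / 2) p)
    (hp : IsDist p) (hq : IsDist q) : ent p ≤ 132 * dRuzsa p q := by
  obtain ⟨x, y, hmin⟩ := exists_isTauMinimizer hp
  have hx := hmin.left
  have hy := hmin.right
  have hxy := hmin.dRuzsa_eq_zero hp
  have hconv : ent (conv x y) ≤ ent x ∧ ent x = ent y := by
    have := ent_le_ent_conv_left hx hy
    have := ent_le_ent_conv_right hx hy
    rw [dRuzsa] at hxy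
    constructor <;> linarith
  have hpy : dRuzsa p y ≤ 66 * dRuzsa p q := by
    have hqq := hmin.le hq hq
    have htri := dRuzsa_triangle hq hp hq
    have hpx := dRuzsa_nonneg hp hx
    rw [dRuzsa_comm q p] at htri
    rw [ruzsaTau, ruzsaTau] at hqq
    linarith
  set V := periods 2 x
  have hV : fibreEnt V p ≤ 1 / 2 * ent x :=
    (h V).trans (by gcongr; exact logCard_periods_le hx)
  have hfib := quotEnt_sub_quotEnt_le_conv hp hy (bot_le : ⊥ ≤ V)
  rw [quotEnt_bot hy, quotEnt_bot (hp.conv hy), quotEnt_periods_eq_zero hx hy hconv.1] at hfib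
  have hquot : quotEnt V p ≤ quotEnt V (conv p y) := by
    rw [quotEnt, quotEnt, push_conv]
    exact ent_le_ent_conv_left (hp.push _) (hy.push _)
  rw [dRuzsa] at hpy
  rw [fibreEnt] at hV
  linarith

lemma rigidDoublingBound_half : RigidDoublingBound.{u, 0} (ZMod 2) (1 / 2 - 1 / 264) (1 / 2) := by
  intro G _ _ _ p q hp hq h
  have hrp : Rigid (ZMod 2) (1 / 2) p := fun V => by
    linarith [h V, fibreEnt_nonneg hq V]
  have hrq : Rigid (ZMod 2) (1 / 2) q := fun V => by
    linarith [h V, fibreEnt_nonneg hp V]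
  have hpq := hrp.ent_le_dRuzsa hp hq
  have hqp := hrq.ent_le_dRuzsa hq hp
  rw [dRuzsa_comm q p] at hqp
  rw [dRuzsa] at hpq hqp
  rw [sDouble]
  linarith

end WeakInverseTheorem

section Improvement

section Ring

variable {R : Type v} [Ring R] {G : Type u} [AddCommGroup G] [Module R G] [Finite G] {η κ δ : ℝ}
  {p q : G → ℝ}

lemma RigidDoublingBound.mono {η' : ℝ} (h : RigidDoublingBound.{u, v} R η κ) (hη : η ≤ η') :
    RigidDoublingBound.{u, v} R η' κ := by
  intro G _ _ _ p q hp hq hrigid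
  have hent := add_nonneg (ent_nonneg hp) (ent_nonneg hq)
  exact (h G p q hp hq hrigid).trans (by gcongr)

lemma mean_mean_sDouble {τ τ' : Type*} [Finite τ] [Finite τ'] {P : τ → ℝ} {Q : τ' → ℝ}
    (hP : IsDist P) (hQ : IsDist Q) {α : Type*} [AddCommGroup α] (f : τ → α → ℝ) (g : τ' → α → ℝ) :
    (mean P fun t => mean Q fun w => sDouble (f t) (g w)) =
      (mean P fun t => ent (f t)) + (mean Q fun w => ent (g w)) -
        mean P fun t => mean Q fun w => ent (conv (f t) (g w)) := by
  simp only [sDouble, mean_add, mean_sub, hQ.mean_const, hP.mean_const]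

lemma RigidDoublingBound.sDouble_le_mean_ent_conv_sumCond (h : RigidDoublingBound.{u, v} R η κ)
    (hη : 0 ≤ η) (hδ : 0 ≤ δ) (hp : IsDist p) (hq : IsDist q)
    (hrigid : Rigid R (δ ^ 2 * κ / 4) p) :
    2 * (1 - (η + δ)) * sDouble p q ≤ mean (conv p q) fun s => mean (conv q p) fun s' =>
      ent (conv (sumCond p q s) (sumCond q p s')) := by
  have hfst : push Prod.fst (prodDist p q) = p :=
    (push_comp_fst (fun x => x) p hq).trans (push_id p)
  have hmean := h.mean_sDouble_condLaw_le hη hδ (hp.prodDist hq) (X := Prod.fst)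
    (fun x => x.1 + x.2) (by rwa [hfst]) (hq.conv hp) (hq.sumCond hp)
  rw [← mean_ent_condLaw (hp.prodDist hq), ← conv_eq_push] at hmean
  simp only [← sumCond.eq_def] at hmean
  rw [mean_mean_sDouble (hp.conv hq) (hq.conv hp), mean_ent_sumCond hp hq, mean_ent_sumCond hq hp,
    sDouble_comm q p] at hmean
  linarith

lemma RigidDoublingBound.sDouble_le_sDouble_conv (h : RigidDoublingBound.{u, v} R η κ)
    (hη : 0 ≤ η) (hδ : 0 ≤ δ) (hp : IsDist p) (hq : IsDist q)
    (hrigid : Rigid R (δ ^ 2 * κ / 4) p) :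
    2 * (1 - (η + δ)) * sDouble p q ≤ sDouble (conv p q) (conv p q) := by
  rw [sDouble.eq_def (conv p q), ← two_mul]
  exact (h.sDouble_le_mean_ent_conv_sumCond hη hδ hp hq hrigid).trans
    (mean_ent_conv_sumCond_le hp hq)

lemma RigidDoublingBound.sDouble_self_le (h : RigidDoublingBound.{u, v} R η κ) (hκ : 0 ≤ κ)
    (hδ : 0 ≤ δ) (hδ' : δ ≤ 1) (hp : IsDist p) (hrigid : Rigid R (δ ^ 2 * κ / 4) p) :
    sDouble p p ≤ 2 * (η + δ) * ent p := by
  have hle : δ ^ 2 * κ / 4 ≤ κ / 2 := by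
    linarith [mul_le_of_le_one_left hκ (pow_le_one₀ hδ hδ' : δ ^ 2 ≤ 1)]
  have hbound := h G p p hp hp fun V => by
    linarith [hrigid V, mul_le_mul_of_nonneg_right hle (logCard_nonneg V)]
  linarith [mul_nonneg hδ (ent_nonneg hp)]

lemma RigidDoublingBound.exists_submodule_of_self (h : RigidDoublingBound.{u, v} R η κ)
    (hη : η ≤ 1 / 2 - 1 / 264) {f : G → ℝ} (hf : IsDist f) :
    ∃ V : Submodule R G, κ * logCard V ≤ 2 * ent f ∧
      quotEnt V f ≤ 132 * (ent (conv f f) - ent f) := by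
  obtain ⟨V, -, hcard, hs⟩ := h.exists_quotient ⊥ hf hf
  rw [logCard_bot, quotEnt_bot hf] at hcard
  have hnonneg := quotEnt_nonneg hf V
  have hη' : η * (quotEnt V f + quotEnt V f) ≤
      (1 / 2 - 1 / 264) * (quotEnt V f + quotEnt V f) := by gcongr
  have hconv := sDouble_le_fibreEnt_add V hf hf
  rw [fibreEnt] at hconv
  simp only [sDouble] at hs hconv
  exact ⟨V, by linarith, by linarith⟩

lemma sDouble_push_mkQ_le (V : Submodule R G) (hp : IsDist p) (hq : IsDist q) :
    sDouble (push V.mkQ p) (push V.mkQ q) ≤ quotEnt V q := by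
  have := ent_le_ent_conv_left (hp.push V.mkQ) (hq.push V.mkQ)
  rw [sDouble, quotEnt]
  linarith

end Ring

variable {G : Type u} [AddCommGroup G] [Module (ZMod 2) G] [Finite G] {η κ δ θ : ℝ} {z : G → ℝ}

lemma endgameInfo_nonneg (hz : IsDist z) : 0 ≤ endgameInfo z := by
  have hnonneg : 0 ≤ mean (endgameIndex z) fun t =>
      ent (conv (endgameLaw z t) (endgameLaw z t)) - ent (endgameLaw z t) := by
    rw [← hz.endgameIndex.mean_const 0]
    exact mean_mono hz.endgameIndex.1 fun t =>
      sub_nonneg.2 (ent_le_ent_conv_left (hz.endgameLaw t) (hz.endgameLaw t))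
  linarith [mean_ent_conv_sub_ent_endgameLaw_le hz]

lemma RigidDoublingBound.mean_sDouble_endgameLaw_le
    (h : RigidDoublingBound.{u, 0} (ZMod 2) η κ) (hη : η ≤ 1 / 2 - 1 / 264) (hz : IsDist z)
    (hrigid : Rigid (ZMod 2) (δ ^ 2 * κ / 4) (conv z z)) :
    (mean (endgameIndex z) fun t => mean (endgameIndex z) fun t' =>
        sDouble (endgameLaw z t) (endgameLaw z t')) ≤
      δ ^ 2 / 2 * (sDouble (conv z z) (conv z z) - endgameInfo z) + 396 * endgameInfo z := by
  have hP := hz.endgameIndex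
  choose V hcard hquot using fun t => h.exists_submodule_of_self hη (hz.endgameLaw t)
  rw [← push_sum₁₂ hz] at hrigid
  have hfibre := hrigid.mean_fibreEnt_condLaw_le hz.fourCopies
    (fun ω => (sum₂₃ ω, sum₁₂₃₄ ω)) hP V
  have hcard' := mul_le_mul_of_nonneg_left (mean_mono hP.1 hcard) (by positivity : 0 ≤ δ ^ 2 / 4)
  have hquot' := mean_mono hP.1 hquot
  rw [mean_const_mul, mean_const_mul, mean_ent_endgameLaw hz] at hcard'
  rw [mean_const_mul] at hquot'
  have hend := mean_ent_conv_sub_ent_endgameLaw_le hz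
  calc (mean (endgameIndex z) fun t => mean (endgameIndex z) fun t' =>
        sDouble (endgameLaw z t) (endgameLaw z t'))
    _ ≤ mean (endgameIndex z) fun t => mean (endgameIndex z) fun t' =>
          fibreEnt (V t') (endgameLaw z t) + quotEnt (V t') (endgameLaw z t') :=
        mean_mono hP.1 fun t => mean_mono hP.1 fun t' =>
          (sDouble_le_fibreEnt_add (V t') (hz.endgameLaw t) (hz.endgameLaw t')).trans
            (add_le_add_right (sDouble_push_mkQ_le _ (hz.endgameLaw t) (hz.endgameLaw t')) _)
    _ = (mean (endgameIndex z) fun t => mean (endgameIndex z) fun t' =>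
          fibreEnt (V t') (endgameLaw z t)) +
            mean (endgameIndex z) fun t' => quotEnt (V t') (endgameLaw z t') := by
        simp only [mean_add, hP.mean_const]
    _ ≤ _ := by
        simp only [endgameIndex, endgameLaw] at *
        linarith

lemma RigidDoublingBound.endgame_le (h : RigidDoublingBound.{u, 0} (ZMod 2) η κ)
    (hη : η ≤ 1 / 2 - 1 / 264) (hz : IsDist z)
    (hrigid : Rigid (ZMod 2) (δ ^ 2 * κ / 4) (conv z z)) :
    2 * (sDouble (conv z z) (conv z z) - endgameInfo z) ≤
      sDouble (conv (conv z z) (conv z z)) (conv (conv z z) (conv z z)) +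
        δ ^ 2 / 2 * (sDouble (conv z z) (conv z z) - endgameInfo z) + 396 * endgameInfo z := by
  have hmean := h.mean_sDouble_endgameLaw_le hη hz hrigid
  rw [mean_mean_sDouble hz.endgameIndex hz.endgameIndex, mean_ent_endgameLaw hz] at hmean
  linarith [mean_ent_conv_endgameLaw_le hz]

variable {p q : G → ℝ}

/-- For `X ∼ p` and `Y ∼ q`, the variables `X`, `X + Y` and the sums of two and of four independent
copies of `X + Y` are `κ`-rigid. -/
structure RigidSums (κ : ℝ) (p q : G → ℝ) : Prop where
  left : Rigid (ZMod 2) κ p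
  sum : Rigid (ZMod 2) κ (conv p q)
  twoSums : Rigid (ZMod 2) κ (conv (conv p q) (conv p q))
  fourSums : Rigid (ZMod 2) κ
    (conv (conv (conv p q) (conv p q)) (conv (conv p q) (conv p q)))

lemma RigidDoublingBound.almost_extremal_conv (h : RigidDoublingBound.{u, 0} (ZMod 2) η κ)
    (hκ : 0 ≤ κ) (hη : 0 ≤ η) (hδ : 0 ≤ δ) (hηδ : η + δ ≤ 1 / 2)
    (hp : IsDist p) (hq : IsDist q) (hrigid : RigidSums (δ ^ 2 * κ / 4) p q)
    (hs : (η + δ - θ) * (ent p + ent q) ≤ sDouble p q) :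
    endgameInfo (conv p q) ≤ 4 * θ * (ent p + ent q) ∧
      2 * (η + δ) * ent (conv (conv p q) (conv p q)) - 4 * θ * (ent p + ent q) ≤
        sDouble (conv (conv p q) (conv p q)) (conv (conv p q) (conv p q)) ∧
      (η + δ - θ) * (ent p + ent q) ≤
        sDouble (conv (conv p q) (conv p q)) (conv (conv p q) (conv p q)) := by
  obtain ⟨hrp, hrz, hru, -⟩ := hrigid
  have hz := hp.conv hq
  have hpq := h.sDouble_le_sDouble_conv hη hδ hp hq hrp
  have hpq₀ : 0 ≤ sDouble p q := sub_nonneg.2 (ent_conv_le_add hp hq)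
  have hz_ent : ent (conv p q) = ent p + ent q - sDouble p q := (sub_sub_cancel _ _).symm
  generalize conv p q = z at *
  have hzz := (h.sDouble_le_mean_ent_conv_sumCond hη hδ hz hz hrz).trans_eq
    (mean_ent_conv_sumCond hz)
  have hzz₀ : 0 ≤ sDouble z z := sub_nonneg.2 (ent_conv_le_add hz hz)
  have hu_ent : ent (conv z z) = ent z + ent z - sDouble z z := (sub_sub_cancel _ _).symm
  have huu := h.sDouble_self_le hκ hδ (by linarith) (hz.conv hz) hru
  have hI := endgameInfo_nonneg hz
  have hgain := mul_nonneg (by linarith : 0 ≤ 1 - 2 * (η + δ)) hpq₀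
  have hgain' := mul_nonneg (by linarith : 0 ≤ 1 - 2 * (η + δ)) hzz₀
  have hz_extremal : 2 * (η + δ) * ent z - sDouble z z ≤ 2 * θ * (ent p + ent q) := by
    rw [hz_ent]
    linarith
  rw [hu_ent] at huu ⊢
  refine ⟨?_, ?_, ?_⟩ <;> linarith

lemma RigidDoublingBound.le_of_almost_extremal (h : RigidDoublingBound.{u, 0} (ZMod 2) η κ)
    (hκ : 0 ≤ κ) (hη : 0 ≤ η) (hη' : η ≤ 1 / 2 - 1 / 264) (hδ : 0 ≤ δ) (hδ' : δ ≤ 1 / 264)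
    (hp : IsDist p) (hq : IsDist q) (hrigid : RigidSums (δ ^ 2 * κ / 4) p q)
    (hs : (η + δ - θ) * (ent p + ent q) ≤ sDouble p q) :
    2 * (η + δ) * (η + δ - θ) * (ent p + ent q) ≤ (δ + 1600 * θ) * (ent p + ent q) := by
  obtain ⟨hinfo, hextremal, hlarge⟩ :=
    h.almost_extremal_conv hκ hη hδ (by linarith) hp hq hrigid hs
  obtain ⟨-, -, hru, hrS⟩ := hrigid
  have hz := hp.conv hq
  have hz_ent := ent_conv_le_add hp hq
  generalize conv p q = z at *
  have hu := hz.conv hz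
  have hu_ent := ent_conv_le_add hz hz
  have hend := h.endgame_le hη' hz hru
  have hSS := h.sDouble_self_le hκ hδ (by linarith) (hu.conv hu) hrS
  have hS_ent : ent (conv (conv z z) (conv z z)) =
      ent (conv z z) + ent (conv z z) - sDouble (conv z z) (conv z z) := (sub_sub_cancel _ _).symm
  have hsmall : δ ^ 2 / 2 * (sDouble (conv z z) (conv z z) - endgameInfo z) ≤
      δ * (ent p + ent q) := by
    have hle : sDouble (conv z z) (conv z z) - endgameInfo z ≤ 2 * (ent p + ent q) := by
      rw [sDouble]
      linarith [ent_le_ent_conv_left hu hu, endgameInfo_nonneg hz]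
    have hδ2 : δ ^ 2 ≤ δ := by nlinarith
    have hH : 0 ≤ ent p + ent q := add_nonneg (ent_nonneg hp) (ent_nonneg hq)
    calc δ ^ 2 / 2 * (sDouble (conv z z) (conv z z) - endgameInfo z)
      _ ≤ δ ^ 2 / 2 * (2 * (ent p + ent q)) := by gcongr
      _ = δ ^ 2 * (ent p + ent q) := by ring
      _ ≤ δ * (ent p + ent q) := by gcongr
  have hmul := mul_le_mul_of_nonneg_left hlarge (by linarith : 0 ≤ 2 * (η + δ))
  rw [hS_ent] at hSS
  linarith

lemma exists_rigidSums (κ : ℝ) (hp : IsDist p) (hq : IsDist q) :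
    ∃ V : Submodule (ZMod 2) G, κ * logCard V ≤ 8 * (ent p + ent q) ∧
      RigidSums κ (push V.mkQ p) (push V.mkQ q) := by
  have hz := hp.conv hq
  have hu := hz.conv hz
  have hS := hu.conv hu
  have hfamily : ∀ i, IsDist ((![p, q, conv p q, conv (conv p q) (conv p q),
      conv (conv (conv p q) (conv p q)) (conv (conv p q) (conv p q))] : Fin 5 → G → ℝ) i) := by
    intro i
    fin_cases i
    exacts [hp, hq, hz, hu, hS]
  obtain ⟨V, -, hcard, hsum⟩ := exists_rigid_quotient (R := ZMod 2) hfamily κ ⊥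
  refine ⟨V, ?_, ?_⟩
  · simp only [Fin.sum_univ_five, Matrix.cons_val, quotEnt_bot, logCard_bot,
      hp, hq, hz, hu, hS, sub_zero] at hcard
    linarith [quotEnt_nonneg hp V, quotEnt_nonneg hq V, quotEnt_nonneg hz V, quotEnt_nonneg hu V,
      quotEnt_nonneg hS V, ent_conv_le_add hp hq, ent_conv_le_add hz hz, ent_conv_le_add hu hu]
  · have hrigid := rigid_of_sum_fibreEnt_le (fun i => (hfamily i).push V.mkQ) hsum
    have hsum := hrigid 2
    have htwo := hrigid 3
    have hfour := hrigid 4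
    simp only [Matrix.cons_val, push_conv] at hsum htwo hfour
    exact ⟨hrigid 0, hsum, htwo, hfour⟩

lemma RigidDoublingBound.sDouble_le_of_rigidSums {m : ℝ}
    (h : RigidDoublingBound.{u, 0} (ZMod 2) η κ) (hκ : 0 ≤ κ) (hη' : η ≤ 1 / 2 - 1 / 264)
    (hm : 0 < m) (hmη : m ≤ η) (hδ : δ = m ^ 2 / 4000) (hηm : η < m + δ) (hp : IsDist p)
    (hq : IsDist q) (hrigid : RigidSums (δ ^ 2 * κ / 4) p q) :
    sDouble p q ≤ (m - 2 * δ) * (ent p + ent q) := by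
  have hδ₀ : 0 < δ := by rw [hδ]; positivity
  have hδm : δ ≤ m / 8000 := by rw [hδ]; nlinarith
  by_contra! hlarge
  have hH : 0 < ent p + ent q := by
    refine (add_nonneg (ent_nonneg hp) (ent_nonneg hq)).lt_of_ne fun h₀ => ?_
    rw [sDouble, ← h₀] at hlarge
    linarith [ent_nonneg (hp.conv hq)]
  have hextremal : (η + δ - 4 * δ) * (ent p + ent q) ≤ sDouble p q :=
    (mul_le_mul_of_nonneg_right (by linarith) hH.le).trans hlarge.le
  have hcore := h.le_of_almost_extremal hκ (by linarith) hη' hδ₀.le (by linarith) hp hq hrigid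
    hextremal
  have hbound := le_of_mul_le_mul_right hcore hH
  have hm_sq : m * (m - 4 * δ) ≤ (η + δ) * (η + δ - 4 * δ) := by gcongr <;> linarith
  have hmδ : m * δ ≤ δ := mul_le_of_le_one_left hδ₀.le (by linarith)
  linarith

lemma RigidDoublingBound.improve {m : ℝ} (h : RigidDoublingBound.{u, 0} (ZMod 2) η κ)
    (hκ : 0 ≤ κ) (hη' : η ≤ 1 / 2 - 1 / 264) (hm : 0 < m) (hmη : m ≤ η) (hδ : δ = m ^ 2 / 4000)
    (hηm : η < m + δ) :
    RigidDoublingBound.{u, 0} (ZMod 2) (m - δ) (δ * (δ ^ 2 * κ / 4) / 8) := by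
  have hδ₀ : 0 ≤ δ := by rw [hδ]; positivity
  have hδm : 2 * δ ≤ m := by rw [hδ]; nlinarith
  intro G _ _ _ p q hp hq hjoint
  obtain ⟨V, hcard, hrigid⟩ := exists_rigidSums (δ ^ 2 * κ / 4) hp hq
  have hloss : fibreEnt V p + fibreEnt V q ≤ δ * (ent p + ent q) := by
    have := mul_le_mul_of_nonneg_left hcard (by positivity : 0 ≤ δ / 8)
    linarith [hjoint V]
  have hquot : sDouble (push V.mkQ p) (push V.mkQ q) ≤ (m - 2 * δ) * (ent p + ent q) :=
    (h.sDouble_le_of_rigidSums hκ hη' hm hmη hδ hηm (hp.push V.mkQ) (hq.push V.mkQ) hrigid).trans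
      (mul_le_mul_of_nonneg_left (add_le_add (quotEnt_le hp V) (quotEnt_le hq V)) (by linarith))
  linarith [sDouble_le_fibreEnt_add V hp hq, fibreEnt_nonneg hq V]

end Improvement

section Conclusion

lemma exists_rigidDoublingBound {ε : ℝ} (hε : 0 < ε) :
    ∃ κ : ℝ, 0 < κ ∧ RigidDoublingBound.{u, 0} (ZMod 2) ε κ := by
  let A : Set ℝ := {η | 0 ≤ η ∧ ∃ κ : ℝ, 0 < κ ∧ RigidDoublingBound.{u, 0} (ZMod 2) η κ}
  have hbdd : BddBelow A := ⟨0, fun η h => h.1⟩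
  have hhalf : 1 / 2 - 1 / 264 ∈ A := ⟨by norm_num, 1 / 2, by norm_num, rigidDoublingBound_half⟩
  have hinf : sInf A = 0 := by
    refine le_antisymm (not_lt.1 fun hpos => ?_) (le_csInf ⟨_, hhalf⟩ fun η h => h.1)
    have hinf_le : sInf A ≤ 1 / 2 - 1 / 264 := csInf_le hbdd hhalf
    obtain ⟨δ, hδ⟩ : ∃ δ, δ = sInf A ^ 2 / 4000 := ⟨_, rfl⟩
    have hδ₀ : 0 < δ := by rw [hδ]; positivity
    have hδ_le : δ ≤ sInf A := by rw [hδ]; nlinarith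
    obtain ⟨η, ⟨hη₀, κ, hκ, h⟩, hη⟩ := exists_lt_of_csInf_lt ⟨_, hhalf⟩ (lt_add_of_pos_right _ hδ₀)
    have hmin : min η (1 / 2 - 1 / 264) ∈ A := by
      rcases min_choice η (1 / 2 - 1 / 264) with hc | hc <;> rw [hc]
      exacts [⟨hη₀, κ, hκ, h⟩, hhalf]
    have hinf_le_min := csInf_le hbdd hmin
    obtain ⟨-, κ', hκ', h'⟩ := hmin
    have himp := h'.improve hκ'.le (min_le_right _ _) hpos hinf_le_min hδ
      ((min_le_left _ _).trans_lt hη)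
    have := csInf_le hbdd (⟨by linarith, _, by positivity, himp⟩ : sInf A - δ ∈ A)
    linarith
  obtain ⟨η, ⟨-, κ, hκ, h⟩, hη⟩ := exists_lt_of_csInf_lt ⟨_, hhalf⟩ (hinf.trans_lt hε)
  exact ⟨κ, hκ, h.mono hη.le⟩

variable {R : Type v} [Ring R] {G : Type u} [AddCommGroup G] [Module R G] [Finite G]

lemma ent_unifOn {α : Type*} [Finite α] {s : Set α} (hs : s.Nonempty) :
    ent (unifOn s) = log (Nat.card s) := by
  have hcard : (Nat.card s : ℝ) ≠ 0 := by
    have := hs.to_subtype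
    exact Nat.cast_ne_zero.2 Nat.card_pos.ne'
  calc ent (unifOn s) = ∑ᶠ a ∈ s, negMulLog (Nat.card s : ℝ)⁻¹ := by
        refine finsum_congr fun a => ?_
        by_cases ha : a ∈ s <;> simp [unifOn, ha]
    _ = Nat.card s * negMulLog (Nat.card s : ℝ)⁻¹ := by
        rw [finsum_mem_eq_finite_toFinset_sum _ s.toFinite, Finset.sum_const, nsmul_eq_mul,
          ← Set.ncard_eq_toFinset_card, ← Nat.card_coe_set_eq]
    _ = log (Nat.card s) := by
        rw [negMulLog, log_inv]
        field_simp

lemma condEnt_eq_rvCondEnt {α β : Type*} [Finite α] [Finite β] {r : α × β → ℝ} (hr : IsDist r) :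
    condEnt r = rvCondEnt r Prod.fst Prod.snd := by
  rw [← mean_ent_condLaw hr]
  refine mean_congr_of_support fun b hb => ?_
  rw [condLaw, if_neg hb]
  exact congrArg (fun r => ent (fiber r b)) (push_id r).symm

lemma condEnt_push_pair_mkQ (V : Submodule R G) {p : G → ℝ} (hp : IsDist p) :
    condEnt (push (fun x => (x, V.mkQ x)) p) = fibreEnt V p := by
  have hjoint : ent (push (fun x => (x, V.mkQ x)) p) = ent p :=
    ent_push_of_injective hp fun x y h => congrArg Prod.fst h
  rw [condEnt_eq_rvCondEnt (hp.push _), rvCondEnt, rvEnt, rvEnt, push_snd_pair, fibreEnt, quotEnt,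
    ← hjoint]
  exact congrArg (fun r => ent r - _) (push_id _)

end Conclusion

theorem statement2_general (ε : ℝ) (hε : 0 < ε) : ∃ L : ℝ, 0 < L ∧
    ∀ (G : Type u) [AddCommGroup G] [Module (ZMod 2) G] [Finite G] (p q : G → ℝ),
      IsDist p → IsDist q → ∃ V : Submodule (ZMod 2) G,
        ent (unifOn (V : Set G)) ≤ L * (ent p + ent q) ∧
        condEnt (push (fun x => (x, V.mkQ x)) p) ≥ sDouble p q - ε * (ent p + ent q) ∧
        condEnt (push (fun x => (x, V.mkQ x)) q) ≥ sDouble p q - ε * (ent p + ent q) := by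
  obtain ⟨κ, hκ, h⟩ := exists_rigidDoublingBound.{u} hε
  refine ⟨κ⁻¹, inv_pos.2 hκ, fun G _ _ _ p q hp hq => ?_⟩
  obtain ⟨V, -, hcard, hs⟩ := h.exists_quotient ⊥ hp hq
  rw [logCard_bot, quotEnt_bot hp, quotEnt_bot hq] at hcard
  have hquot : ε * (quotEnt V p + quotEnt V q) ≤ ε * (ent p + ent q) := by
    gcongr
    exacts [quotEnt_le hp V, quotEnt_le hq V]
  have hpq := sDouble_le_fibreEnt_add V hp hq
  have hqp := sDouble_le_fibreEnt_add V hq hp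
  rw [sDouble_comm, sDouble_comm (push _ q)] at hqp
  refine ⟨V, ?_, ?_, ?_⟩
  · rw [show ent (unifOn (V : Set G)) = logCard V from ent_unifOn V.nonempty, le_inv_mul_iff₀ hκ]
    linarith [quotEnt_nonneg hp V, quotEnt_nonneg hq V]
  · rw [condEnt_push_pair_mkQ V hp]
    linarith
  · rw [condEnt_push_pair_mkQ V hq]
    linarith

/-- For every `ε > 0` there is `L > 0` such that for independent `X, Y` with
`H[X+Y] = H[X]+H[Y]−s`, `s ≥ 0`, there is a subspace `V` with `H[𝐔_V] ≤ L(H[X]+H[Y])` and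
`H[X | π_V(X)], H[Y | π_V(Y)] ≥ s − ε(H[X]+H[Y])`. -/
theorem statement2 :
    ∀ ε : ℝ, 0 < ε → ∃ L : ℝ, 0 < L ∧
      ∀ (n : ℕ) (p q : Fvec n → ℝ), IsDist p → IsDist q →
        ∀ s : ℝ, 0 ≤ s → ent (conv p q) = ent p + ent q - s →
          ∃ V : Submodule (ZMod 2) (Fvec n),
            ent (unifOn (V : Set (Fvec n))) ≤ L * (ent p + ent q) ∧
            condEnt (selfProj V p) ≥ s - ε * (ent p + ent q) ∧
            condEnt (selfProj V q) ≥ s - ε * (ent p + ent q) := by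
  intro ε hε
  obtain ⟨L, hL, h⟩ := statement2_general ε hε
  exact ⟨L, hL, fun n p q hp hq s _ hs =>
    (by rw [sDouble, hs, sub_sub_cancel] : sDouble p q = s) ▸ h (Fvec n) p q hp hq⟩
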